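/- arXiv:2501.01354 — 3 statements merged into one kernel-verified Lean document; each statement's English description precedes it below -/
import Mathlib

section
/- Let x_n : [0,∞) → ℝ and y_n : [0,∞) → [0,∞) be functions, let x, u, v : [0,∞) → ℝ and y : [0,∞) → [0,∞) be continuous functions such that y is strictly increasing and x is continuously differentiable, and let c_n be a sequence of real numbers with c_n → ∞. If c_n(x_n(t) − x(t)) → u(t) and c_n(y_n(t) − y(t)) → v(t) locally uniformly in t ∈ [0,∞), then c_n(x_n(y_n(t)) − x(y(t))) → u(y(t)) + x'(y(t))·v(t) locally uniformly in t ∈ [0,∞). -/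
open Filter Topology Set

/-!
When the limit is continuous, locally uniform convergence is the same as convergence of `F n t`
as `n → ∞` and `t → t₀` jointly, so it suffices to find the limit of
`c n • (xn n (yn n t) - x (y t))
  = c n • (xn n (yn n t) - x (yn n t)) + c n • (x (yn n t) - x (y t))`.
Since `c n → ∞`, both `yn n t` and `y t` tend to `y t₀`. Hence the first summand tends to
`u (y t₀)`, and the second to `x' (y t₀) (v t₀)` because a `C¹` function on a convex set is strictly
differentiable within it.
-/

section LocallyUniform

variable {ι α β : Type*} [UniformSpace β] {F : ι → α → β} {f : α → β} {p : Filter ι}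

theorem tendstoLocallyUniformlyOn_iff_forall_tendsto_nhds [TopologicalSpace α] {s : Set α}
    (hf : ContinuousOn f s) :
    TendstoLocallyUniformlyOn F f p s ↔
      ∀ a ∈ s, Tendsto (fun q : ι × α ↦ F q.1 q.2) (p ×ˢ 𝓝[s] a) (𝓝 (f a)) := by
  rw [tendstoLocallyUniformlyOn_iff_forall_tendsto]
  refine forall₂_congr fun a ha ↦ ?_
  have hfa : Tendsto (fun q : ι × α ↦ f q.2) (p ×ˢ 𝓝[s] a) (𝓝 (f a)) :=
    Tendsto.comp (hf a ha) tendsto_snd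
  exact ⟨hfa.congr_uniformity,
    fun hF ↦ (hfa.prodMk_nhds hF).mono_right (nhds_le_uniformity (f a))⟩

theorem tendstoLocallyUniformlyOn_Ici_iff [LinearOrder α] [TopologicalSpace α] [ClosedIciTopology α]
    [CompactIccSpace α] [NoMaxOrder α] {a : α} :
    TendstoLocallyUniformlyOn F f p (Ici a) ↔ ∀ b > a, TendstoUniformlyOn F f p (Icc a b) := by
  refine ⟨fun h b _ ↦ ?_, fun h ↦ tendstoLocallyUniformlyOn_of_forall_exists_nhds fun t ht ↦ ?_⟩
  · exact (tendstoLocallyUniformlyOn_iff_tendstoUniformlyOn_of_compact isCompact_Icc).1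
      (h.mono Icc_subset_Ici_self)
  · obtain ⟨b, htb⟩ := exists_gt t
    exact ⟨Icc a b, inter_mem_nhdsWithin _ (Iic_mem_nhds htb), h b (lt_of_le_of_lt ht htb)⟩

end LocallyUniform

open Asymptotics in
theorem tendsto_smul_sub_of_hasFDerivAtFilter {𝕜 E F α : Type*} [NontriviallyNormedField 𝕜]
    [AddCommGroup E] [Module 𝕜 E] [TopologicalSpace E] [ContinuousAdd E] [ContinuousSMul 𝕜 E]
    [AddCommGroup F] [Module 𝕜 F] [TopologicalSpace F] [ContinuousAdd F] [ContinuousSMul 𝕜 F]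
    {f : E → F} {f' : E →L[𝕜] F} {L : Filter (E × E)} (hf : HasFDerivAtFilter f f' L)
    {l : Filter α} {c : α → 𝕜} {a b : α → E} {v : E}
    (hab : Tendsto (fun i ↦ (a i, b i)) l L) (hv : Tendsto (fun i ↦ c i • (a i - b i)) l (𝓝 v)) :
    Tendsto (fun i ↦ c i • (f (a i) - f (b i))) l (𝓝 (f' v)) := by
  have remainder := calc
    (fun i ↦ c i • (f (a i) - f (b i)) - f' (c i • (a i - b i)))
        =o[𝕜; l] fun i ↦ c i • (a i - b i) := by
      simpa [smul_sub] using (hf.isLittleOTVS.comp_tendsto hab).smul_left c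
    _ =O[𝕜; l] (1 : α → 𝕜) := hv.isBigOTVS_one _
  rw [isLittleOTVS_one] at remainder
  simpa using remainder.add ((map_continuous f').tendsto v |>.comp hv)

section Normed

variable {𝕜 E F : Type*} [NontriviallyNormedField 𝕜]
  [NormedAddCommGroup E] [NormedSpace 𝕜 E] [NormedAddCommGroup F] [NormedSpace 𝕜 F]

theorem tendsto_of_tendsto_smul_sub_of_tendsto_cobounded {α : Type*} {l : Filter α} {c : α → 𝕜}
    {a b : α → E} {v z : E} (hc : Tendsto c l (Bornology.cobounded 𝕜))
    (hv : Tendsto (fun i ↦ c i • (a i - b i)) l (𝓝 v)) (hb : Tendsto b l (𝓝 z)) :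
    Tendsto a l (𝓝 z) := by
  have hsub : Tendsto (fun i ↦ a i - b i) l (𝓝 0) :=
    tendsto_zero_of_isBoundedUnder_smul_of_tendsto_cobounded hv.norm.isBoundedUnder_le hc
  simpa using hsub.add hb

variable [IsRCLikeNormedField 𝕜] [NormedSpace ℝ E] {s : Set E}

theorem hasFDerivAtFilter_nhdsWithin_prod_of_continuousWithinAt (hs : Convex ℝ s) {f : E → F}
    {f' : E → E →L[𝕜] F} {z : E} (hf : ∀ᶠ w in 𝓝[s] z, HasFDerivWithinAt f (f' w) s w)
    (hf' : ContinuousWithinAt f' s z) : HasFDerivAtFilter f (f' z) (𝓝[s] z ×ˢ 𝓝[s] z) := by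
  refine .of_isLittleO (Asymptotics.isLittleO_iff.2 fun ε hε ↦ ?_)
  have hclose : ∀ᶠ w in 𝓝[s] z, ‖f' w - f' z‖ < ε := by
    simpa only [dist_eq_norm] using Metric.tendsto_nhds.1 hf' ε hε
  obtain ⟨δ, hδ, hball⟩ := Metric.mem_nhdsWithin_iff.1 (hf.and hclose)
  have hmem : Metric.ball z δ ∩ s ∈ 𝓝[s] z :=
    inter_mem (mem_nhdsWithin_of_mem_nhds (Metric.ball_mem_nhds z hδ)) self_mem_nhdsWithin
  filter_upwards [prod_mem_prod hmem hmem] with w ⟨hw₁, hw₂⟩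
  exact ((convex_ball z δ).inter hs).norm_image_sub_le_of_norm_hasFDerivWithin_le'
    (fun q hq ↦ (hball hq).1.mono inter_subset_right) (fun q hq ↦ (hball hq).2.le) hw₂ hw₁

theorem stmt_0_general {ι T : Type*} [TopologicalSpace T] {S : Set T} {l : Filter ι}
    (hs : Convex ℝ s) {xn : ι → E → F} {yn : ι → T → E} {x u : E → F} {x' : E → E →L[𝕜] F}
    {y v : T → E} {c : ι → 𝕜} (hyn : ∀ᶠ n in l, MapsTo (yn n) S s) (hy : MapsTo y S s)
    (hy_cont : ContinuousOn y S) (hu_cont : ContinuousOn u s) (hv_cont : ContinuousOn v S)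
    (hx : ∀ z ∈ s, HasFDerivWithinAt x (x' z) s z) (hx'_cont : ContinuousOn x' s)
    (hc : Tendsto c l (Bornology.cobounded 𝕜))
    (hxu : TendstoLocallyUniformlyOn (fun n z ↦ c n • (xn n z - x z)) u l s)
    (hyv : TendstoLocallyUniformlyOn (fun n t ↦ c n • (yn n t - y t)) v l S) :
    TendstoLocallyUniformlyOn (fun n t ↦ c n • (xn n (yn n t) - x (y t)))
      (fun t ↦ u (y t) + x' (y t) (v t)) l S := by
  have hlim_cont : ContinuousOn (fun t ↦ u (y t) + x' (y t) (v t)) S :=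
    (hu_cont.comp hy_cont hy).add ((hx'_cont.comp hy_cont hy).clm_apply hv_cont)
  rw [tendstoLocallyUniformlyOn_iff_forall_tendsto_nhds hlim_cont]
  rw [tendstoLocallyUniformlyOn_iff_forall_tendsto_nhds hu_cont] at hxu
  rw [tendstoLocallyUniformlyOn_iff_forall_tendsto_nhds hv_cont] at hyv
  intro t ht
  have hy_lim : Tendsto (fun q : ι × T ↦ y q.2) (l ×ˢ 𝓝[S] t) (𝓝[s] y t) :=
    ((hy_cont t ht).tendsto_nhdsWithin hy).comp tendsto_snd
  have hyn_lim : Tendsto (fun q : ι × T ↦ yn q.1 q.2) (l ×ˢ 𝓝[S] t) (𝓝[s] y t) :=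
    tendsto_nhdsWithin_iff.2
      ⟨tendsto_of_tendsto_smul_sub_of_tendsto_cobounded (hc.comp tendsto_fst) (hyv t ht)
        (hy_lim.mono_right nhdsWithin_le_nhds),
      (hyn.prod_mk eventually_mem_nhdsWithin).mono fun _ hq ↦ hq.1 hq.2⟩
  have hx_strict : HasFDerivAtFilter x (x' (y t)) (𝓝[s] y t ×ˢ 𝓝[s] y t) :=
    hasFDerivAtFilter_nhdsWithin_prod_of_continuousWithinAt hs
      (eventually_mem_nhdsWithin.mono hx) (hx'_cont _ (hy ht))
  have houter := (hxu (y t) (hy ht)).comp (tendsto_fst.prodMk hyn_lim)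
  have hinner :=
    tendsto_smul_sub_of_hasFDerivAtFilter hx_strict (hyn_lim.prodMk hy_lim) (hyv t ht)
  refine (houter.add hinner).congr fun q ↦ ?_
  simp only [Function.comp_apply, ← smul_add, sub_add_sub_cancel]

end Normed

/-- Lemma 3.1 (variant of Whitt, Theorem 13.3.3): locally uniform convergence of
rescaled compositions.  All functions live on `[0,∞)`, and locally uniform
convergence means uniform convergence on every compact interval `[0,K]`. -/
theorem stmt_0
    (xn : ℕ → ℝ → ℝ) (yn : ℕ → ℝ → ℝ)
    (x y u v x' : ℝ → ℝ) (c : ℕ → ℝ)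
    (hyn_nonneg : ∀ n, ∀ t ∈ Ici (0:ℝ), yn n t ∈ Ici (0:ℝ))
    (hy_nonneg : ∀ t ∈ Ici (0:ℝ), y t ∈ Ici (0:ℝ))
    (hx_cont : ContinuousOn x (Ici 0))
    (hy_cont : ContinuousOn y (Ici 0))
    (hu_cont : ContinuousOn u (Ici 0))
    (hv_cont : ContinuousOn v (Ici 0))
    (hy_mono : StrictMonoOn y (Ici 0))
    (hx_deriv : ∀ t ∈ Ici (0:ℝ), HasDerivWithinAt x (x' t) (Ici 0) t)
    (hx'_cont : ContinuousOn x' (Ici 0))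
    (hc : Tendsto c atTop atTop)
    (hxu : ∀ K > (0:ℝ),
      TendstoUniformlyOn (fun n t => c n * (xn n t - x t)) u atTop (Icc 0 K))
    (hyv : ∀ K > (0:ℝ),
      TendstoUniformlyOn (fun n t => c n * (yn n t - y t)) v atTop (Icc 0 K)) :
    ∀ K > (0:ℝ),
      TendstoUniformlyOn (fun n t => c n * (xn n (yn n t) - x (y t)))
        (fun t => u (y t) + x' (y t) * v t) atTop (Icc 0 K) := by
  have hx'_clm : ContinuousOn (fun z ↦ ContinuousLinearMap.toSpanSingleton ℝ (x' z)) (Ici 0) :=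
    (ContinuousLinearMap.toSpanSingletonLIE ℝ ℝ).continuous.comp_continuousOn hx'_cont
  have key := stmt_0_general (convex_Ici 0) (.of_forall hyn_nonneg) hy_nonneg hy_cont hu_cont
    hv_cont (fun z hz ↦ (hx_deriv z hz).hasFDerivWithinAt) hx'_clm
    (hc.mono_right IsOrderBornology.atTop_le_cobounded)
    (tendstoLocallyUniformlyOn_Ici_iff.2 hxu) (tendstoLocallyUniformlyOn_Ici_iff.2 hyv)
  simpa only [ContinuousLinearMap.toSpanSingleton_apply, smul_eq_mul, mul_comm (v _)] using
    tendstoLocallyUniformlyOn_Ici_iff.1 key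
end

section
/- For every λ_0, λ_1 with λ_crit < λ_0 ≤ λ_1 and every ε > 0 there exists N such that for all n ≥ N, for every λ ∈ [λ_0, λ_1] and every s with ε·n^{−1/2} ≤ s ≤ θ^{(n)}(λ) + (ψ(λ θ^{(n)}(λ)) − ε)/(β^{(n)}(λ)·n^{1/2}), one has H_n(s, λ) > 0. -/
open MeasureTheory Filter Topology Set

/-! In the variable `u = λ s` the perturbation `ψ + √n Δₙ` does not depend on `λ`, while
`u ↦ φ₁⁽ⁿ⁾(u) - u / λ` is concave, vanishes at `0` and at `λ θ⁽ⁿ⁾(λ)`, and has slope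
`-β⁽ⁿ⁾(λ) / λ` at the latter point. Multiplied by `√n`, this arch beats the perturbation for three
reasons. Near `0` it is at least `c √n u ≥ c λ ε`, while `ψ` is small. In the bulk, by concavity, it
is at least its minimum over the two ends of the bulk, which exceeds any bound for `ψ` once `n` and
the distance `M n^{-1/2}` of the bulk to the root are large. Within `O(n^{-1/2})` of the root it is
its tangent up to `O(n^{-1/2})`, and the upper bound on `s` says that this tangent, times `√n`, is
at least `ε - ψ(λ θ⁽ⁿ⁾(λ))`.

The constants are uniform in `n` and `λ` because weak convergence controls the derivative of
`φ₁⁽ⁿ⁾` at any fixed positive point, which yields `c`, and because `x² e^{-xa} ≤ 2 / a²` bounds the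
quadratic error at the root by a multiple of the mean of `Wₙ`. -/

lemma mul_le_apply_of_concaveOn {f : ℝ → ℝ} {c δ s : ℝ} (hf : ConcaveOn ℝ (Ici 0) f)
    (hf0 : f 0 = 0) (hδ : 0 < δ) (hle : c * δ ≤ f δ) (hs : s ∈ Icc 0 δ) : c * s ≤ f s := by
  have hsδ : s / δ ≤ 1 := div_le_one_of_le₀ hs.2 hδ.le
  have hchord := hf.2 (mem_Ici.2 le_rfl) (mem_Ici.2 hδ.le) (sub_nonneg.2 hsδ)
    (div_nonneg hs.1 hδ.le) (sub_add_cancel 1 (s / δ))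
  simp only [smul_eq_mul, hf0, mul_zero, zero_add, div_mul_cancel₀ s hδ.ne'] at hchord
  calc c * s = s / δ * (c * δ) := by field_simp
    _ ≤ s / δ * f δ := mul_le_mul_of_nonneg_left hle (div_nonneg hs.1 hδ.le)
    _ ≤ f s := hchord

lemma sInf_neg_mem_Icc_and_eq_zero_of_concaveOn {f : ℝ → ℝ} {δ T : ℝ}
    (hf : ConcaveOn ℝ (Ici 0) f) (hf0 : f 0 = 0) (hδ : 0 < δ) (hfδ : 0 ≤ f δ) (hT : 0 < T)
    (hfT : f T < 0) :
    sInf {u | 0 < u ∧ f u < 0} ∈ Icc δ T ∧ f (sInf {u | 0 < u ∧ f u < 0}) = 0 := by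
  set S : Set ℝ := {u | 0 < u ∧ f u < 0}
  have hTS : T ∈ S := ⟨hT, hfT⟩
  have hbdd : BddBelow S := ⟨0, fun u hu => hu.1.le⟩
  have hδS : δ ≤ sInf S := le_csInf ⟨T, hTS⟩ fun u hu => le_of_not_ge fun huδ => by
    simpa using (mul_le_apply_of_concaveOn (c := 0) hf hf0 hδ (by simpa using hfδ)
      ⟨hu.1.le, huδ⟩).trans_lt hu.2
  have hS : 0 < sInf S := hδ.trans_le hδS
  have hcont : ContinuousAt f (sInf S) :=
    hf.continuousOn_interior.continuousAt (isOpen_interior.mem_nhds (by simpa using hS))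
  have hle : f (sInf S) ≤ 0 :=
    have := mem_closure_iff_nhdsWithin_neBot.1 (csInf_mem_closure ⟨T, hTS⟩ hbdd)
    le_of_tendsto (hcont.tendsto.mono_left nhdsWithin_le_nhds)
      (eventually_nhdsWithin_of_forall fun u (hu : u ∈ S) => hu.2.le)
  have hge : 0 ≤ f (sInf S) := by
    refine ge_of_tendsto (hcont.tendsto.mono_left (nhdsWithin_le_nhds (s := Iio (sInf S)))) ?_
    filter_upwards [Ioo_mem_nhdsLT hS] with u hu
    exact le_of_not_gt fun hneg => notMem_of_lt_csInf hu.2 hbdd ⟨hu.1, hneg⟩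
  exact ⟨⟨hδS, csInf_le hbdd hTS⟩, hle.antisymm hge⟩

/-- A concave arch `f` over `[0, θ]`: it starts at `0`, has chord slope at least `c` on `[0, δ]`,
and comes down to `0` at `θ ∈ [δ, T]` with slope `-β`, staying within `C (s - θ)²` of its tangent
there for `s ≥ δ / 2`. That `f θ = 0` is the case `s = θ` of the last two fields. The parameters
`δ c T C` are separated from `f θ β` so that estimates can be uniform over a family of arches. -/
structure IsArch (δ c T C : ℝ) (f : ℝ → ℝ) (θ β : ℝ) : Prop where
  concaveOn : ConcaveOn ℝ (Ici 0) f
  map_zero : f 0 = 0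
  le_apply : c * δ ≤ f δ
  root_mem : θ ∈ Icc δ T
  le_tangent : ∀ s ≥ 0, f s ≤ β * (θ - s)
  tangent_le : ∀ s ≥ δ / 2, β * (θ - s) - C * (s - θ) ^ 2 ≤ f s

namespace IsArch

variable {δ c T C θ β : ℝ} {f : ℝ → ℝ}

lemma div_le_slope (h : IsArch δ c T C f θ β) (hδ : 0 < δ) (hc : 0 < c) : c * δ / T ≤ β := by
  have hcδ : c * δ ≤ β * (θ - δ) := h.le_apply.trans (h.le_tangent δ hδ.le)
  have hβ : 0 < β := pos_of_mul_pos_left ((mul_pos hc hδ).trans_le hcδ) (sub_nonneg.2 h.root_mem.1)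
  rw [div_le_iff₀ (hδ.trans_le (h.root_mem.1.trans h.root_mem.2))]
  exact hcδ.trans (mul_le_mul_of_nonneg_left (by linarith [h.root_mem.2]) hβ.le)

lemma min_le_apply (h : IsArch δ c T C f θ β) {δ₁ ρ s : ℝ} (hδ₁ : δ₁ ∈ Ioc 0 δ)
    (hρ : ρ ≤ δ / 2) (hs : s ∈ Icc δ₁ (θ - ρ)) :
    min (c * δ₁) (β * ρ - C * ρ ^ 2) ≤ f s := by
  have hδ : 0 < δ := hδ₁.1.trans_le hδ₁.2
  have hleft : c * δ₁ ≤ f δ₁ := mul_le_apply_of_concaveOn h.concaveOn h.map_zero hδ h.le_apply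
    ⟨hδ₁.1.le, hδ₁.2⟩
  have hright : β * ρ - C * ρ ^ 2 ≤ f (θ - ρ) := by
    simpa using h.tangent_le (θ - ρ) (by linarith [h.root_mem.1])
  exact (min_le_min hleft hright).trans <| h.concaveOn.min_le_of_mem_Icc (mem_Ici.2 hδ₁.1.le)
    (mem_Ici.2 <| hδ₁.1.le.trans (hs.1.trans hs.2)) hs

lemma mul_sub_le_of_le (h : IsArch δ c T C f θ β) (hδ : 0 < δ) (hc : 0 < c) {r s x : ℝ}
    (hr : 0 < r) (hs : s ≤ θ + x / (β * r)) : r * (β * (s - θ)) ≤ x := by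
  have hT : 0 < T := hδ.trans_le (h.root_mem.1.trans h.root_mem.2)
  have hβ : 0 < β := (by positivity : 0 < c * δ / T).trans_le (h.div_le_slope hδ hc)
  rw [← sub_le_iff_le_add', le_div_iff₀ (mul_pos hβ hr)] at hs
  linarith

end IsArch

section Perturbation

variable {δ c T C ε η : ℝ} {ψ : ℝ → ℝ}

lemma exists_lt_near_zero (hδ : 0 < δ) (hc : 0 < c) (hη : η < c * ε)
    (hψ : ContinuousOn ψ (Ici 0)) (hψ0 : ψ 0 = 0) :
    ∃ δ₁ ∈ Ioc 0 δ, ∀ r > 0, ∀ f θ β, IsArch δ c T C f θ β →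
      ∀ s, ε / r ≤ s → s ∈ Icc 0 δ₁ → η < r * f s + ψ s := by
  have hsmall : ∀ᶠ s in 𝓝[≥] 0, -(c * ε - η) < ψ s :=
    (hψ 0 (mem_Ici.2 le_rfl)).eventually (lt_mem_nhds (by linarith))
  obtain ⟨a, ha, haψ⟩ := mem_nhdsGE_iff_exists_Icc_subset.1 hsmall
  refine ⟨min a δ, ⟨lt_min ha hδ, min_le_right _ _⟩, fun r hr f θ β h s hrs hs => ?_⟩
  have hψs : -(c * ε - η) < ψ s := haψ ⟨hs.1, hs.2.trans (min_le_left _ _)⟩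
  have hf : c * ε ≤ r * f s := calc
    c * ε ≤ c * (s * r) := mul_le_mul_of_nonneg_left ((div_le_iff₀ hr).1 hrs) hc.le
    _ = r * (c * s) := by ring
    _ ≤ r * f s := mul_le_mul_of_nonneg_left
      (mul_le_apply_of_concaveOn h.concaveOn h.map_zero hδ h.le_apply
        ⟨hs.1, hs.2.trans (min_le_right _ _)⟩) hr.le
  linarith

lemma eventually_lt_bulk {δ₁ B M : ℝ} (hc : 0 < c) (hδ₁ : δ₁ ∈ Ioc 0 δ)
    (hψB : ∀ s ∈ Icc 0 (T + 1), |ψ s| ≤ B) (hM : 0 ≤ M) (hBM : B + η < c * δ / T * M) :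
    ∀ᶠ r in atTop, ∀ f θ β, IsArch δ c T C f θ β →
      ∀ s ∈ Icc δ₁ (θ - M / r), η < r * f s + ψ s := by
  have hδ : 0 < δ := hδ₁.1.trans_le hδ₁.2
  have hρ : Tendsto (fun r : ℝ => M / r) atTop (𝓝 0) := tendsto_id.const_div_atTop M
  have hCM : Tendsto (fun r : ℝ => c * δ / T * M - C * M * (M / r)) atTop (𝓝 (c * δ / T * M)) := by
    simpa using tendsto_const_nhds.sub (hρ.const_mul (C * M))
  filter_upwards [eventually_gt_atTop 0, hρ.eventually (ge_mem_nhds (half_pos hδ)),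
    eventually_gt_atTop ((B + η) / (c * δ₁)), hCM.eventually (lt_mem_nhds hBM)]
    with r hr hρδ hleft hright f θ β h s hs
  have hMr : 0 ≤ M / r := by positivity
  rw [div_lt_iff₀ (mul_pos hc hδ₁.1)] at hleft
  have hpeak : B + η < r * min (c * δ₁) (β * (M / r) - C * (M / r) ^ 2) := by
    rw [mul_min_of_nonneg _ _ hr.le]
    refine lt_min hleft (hright.trans_le ?_)
    calc c * δ / T * M - C * M * (M / r) ≤ β * M - C * M * (M / r) :=
          sub_le_sub_right (mul_le_mul_of_nonneg_right (h.div_le_slope hδ hc) hM) _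
      _ = r * (β * (M / r) - C * (M / r) ^ 2) := by field_simp
  have hf := mul_le_mul_of_nonneg_left (h.min_le_apply hδ₁ hρδ hs) hr.le
  have hψs := neg_le_of_abs_le
    (hψB s ⟨hδ₁.1.le.trans hs.1, by linarith [hs.2, h.root_mem.2]⟩)
  linarith

lemma eventually_lt_near_root (hδ : 0 < δ) (hc : 0 < c) (hψ : ContinuousOn ψ (Ici 0))
    (hη : η < ε) (M : ℝ) :
    ∀ᶠ r in atTop, ∀ f θ β, IsArch δ c T C f θ β →
      ∀ s, |s - θ| ≤ M / r → s ≤ θ + (ψ θ - ε) / (β * r) → η < r * f s + ψ s := by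
  have huc : UniformContinuousOn ψ (Icc 0 (T + 1)) :=
    isCompact_Icc.uniformContinuousOn_of_continuous (hψ.mono Icc_subset_Ici_self)
  obtain ⟨d, hd, hψd⟩ := Metric.uniformContinuousOn_iff.1 huc ((ε - η) / 2) (by linarith)
  have hρ : Tendsto (fun r : ℝ => M / r) atTop (𝓝 0) := tendsto_id.const_div_atTop M
  have hCM : Tendsto (fun r : ℝ => |C| * M * (M / r)) atTop (𝓝 0) := by
    simpa using hρ.const_mul (|C| * M)
  filter_upwards [eventually_gt_atTop 0, hρ.eventually (ge_mem_nhds (half_pos hδ)),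
    hρ.eventually (gt_mem_nhds hd), hρ.eventually (ge_mem_nhds one_pos),
    hCM.eventually (gt_mem_nhds (half_pos (sub_pos.2 hη)))]
    with r hr hρδ hρd hρ1 hCr f θ β h s hsθ hs
  obtain ⟨hδθ, hθT⟩ := h.root_mem
  obtain ⟨hθs, hsθ'⟩ := abs_le.1 hsθ
  have hψs : |ψ s - ψ θ| < (ε - η) / 2 := hψd s ⟨by linarith, by linarith⟩ θ
    ⟨by linarith, by linarith⟩ (hsθ.trans_lt hρd)
  have hlin : r * (β * (s - θ)) ≤ ψ θ - ε := h.mul_sub_le_of_le hδ hc hr hs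
  have hquad : r * (C * (s - θ) ^ 2) ≤ |C| * M * (M / r) := calc
    r * (C * (s - θ) ^ 2) ≤ r * (|C| * (M / r) ^ 2) := by
      gcongr r * ?_
      exact mul_le_mul (le_abs_self C) (sq_le_sq' hθs hsθ') (sq_nonneg _) (abs_nonneg C)
    _ = |C| * M * (M / r) := by field_simp
  have hf := mul_le_mul_of_nonneg_left (h.tangent_le s (by linarith)) hr.le
  linarith [neg_lt_of_abs_lt hψs]

theorem exists_eventually_lt_of_isArch {ε₀ ε₁ : ℝ} (hδ : 0 < δ) (hc : 0 < c) (hT : 0 < T)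
    (hψ : ContinuousOn ψ (Ici 0)) (hψ0 : ψ 0 = 0) (hε₀ : 0 < ε₀) (hε₁ : 0 < ε₁) :
    ∃ η > 0, ∀ᶠ r in atTop, ∀ f θ β, IsArch δ c T C f θ β →
      ∀ s, ε₀ / r ≤ s → s ≤ θ + (ψ θ - ε₁) / (β * r) →
        s ∈ Icc 0 (T + 1) ∧ η < r * f s + ψ s := by
  obtain ⟨η, hη, hηmin⟩ := exists_between (lt_min (mul_pos hc hε₀) hε₁)
  obtain ⟨hη₀, hη₁⟩ := lt_min_iff.1 hηmin
  obtain ⟨B, hψB⟩ := (isCompact_Icc (a := (0 : ℝ)) (b := T + 1)).exists_bound_of_continuousOn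
    (hψ.mono Icc_subset_Ici_self)
  obtain ⟨M, hM, hBM⟩ : ∃ M ≥ 0, B + η < c * δ / T * M :=
    (((tendsto_id.const_mul_atTop (by positivity : 0 < c * δ / T)).eventually
      (eventually_gt_atTop (B + η))).and (eventually_ge_atTop 0)).exists.imp fun _ h => ⟨h.2, h.1⟩
  obtain ⟨δ₁, hδ₁, hzero⟩ := exists_lt_near_zero (T := T) (C := C) hδ hc hη₀ hψ hψ0
  refine ⟨η, hη, ?_⟩
  filter_upwards [eventually_gt_atTop 0, eventually_ge_atTop M,
    eventually_lt_bulk (C := C) hc hδ₁ hψB hM hBM, eventually_lt_near_root hδ hc hψ hη₁ M]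
    with r hr hMr hbulk hroot f θ β h s hs₀ hs₁
  have hs : 0 ≤ s := (by positivity : 0 ≤ ε₀ / r).trans hs₀
  obtain ⟨hδθ, hθT⟩ := h.root_mem
  have hsθ : s - θ ≤ M / r := by
    rw [le_div_iff₀ hr]
    have hψθ : ψ θ ≤ B := le_of_abs_le (hψB θ ⟨by linarith, by linarith⟩)
    have hslope := h.div_le_slope hδ hc
    refine le_of_mul_le_mul_left ?_ ((by positivity : 0 < c * δ / T).trans_le hslope)
    have := h.mul_sub_le_of_le hδ hc hr hs₁
    linarith [mul_le_mul_of_nonneg_right hslope hM]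
  have hMr1 : M / r ≤ 1 := div_le_one_of_le₀ hMr hr.le
  refine ⟨⟨hs, by linarith⟩, ?_⟩
  rcases le_total s δ₁ with hsδ₁ | hsδ₁
  · exact hzero r hr f θ β h s hs₀ ⟨hs, hsδ₁⟩
  rcases le_total s (θ - M / r) with hsM | hsM
  · exact hbulk f θ β h s ⟨hsδ₁, hsM⟩
  · exact hroot f θ β h s (abs_le.2 ⟨by linarith, hsθ⟩) hs₁

end Perturbation

lemma exp_neg_mul_tangent_le (x u v : ℝ) :
    Real.exp (-x * u) * (1 - x * (v - u)) ≤ Real.exp (-x * v) := calc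
  Real.exp (-x * u) * (1 - x * (v - u))
    ≤ Real.exp (-x * u) * Real.exp (-(x * (v - u))) := by
      gcongr; exact Real.one_sub_le_exp_neg _
  _ = Real.exp (-x * v) := by rw [← Real.exp_add]; ring_nf

lemma sq_mul_exp_neg_mul_le {x a : ℝ} (hx : 0 ≤ x) (ha : 0 < a) :
    x ^ 2 * Real.exp (-x * a) ≤ 2 / a ^ 2 := by
  have hquad : (x * a) ^ 2 ≤ 2 * Real.exp (x * a) := by
    have hxa : 0 ≤ x * a := by positivity
    linarith [Real.quadratic_le_exp_of_nonneg hxa]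
  rw [neg_mul, Real.exp_neg, ← div_eq_mul_inv, div_le_div_iff₀ (Real.exp_pos _) (by positivity)]
  linarith

lemma exists_boundedContinuousFunction_eq_sq_mul_exp {a : ℝ} (ha : 0 < a) :
    ∃ f : BoundedContinuousFunction ℝ ℝ, ∀ x ≥ 0, f x = x ^ 2 * Real.exp (-x * a) := by
  refine ⟨.ofNormedAddCommGroup (fun x => |x| ^ 2 * Real.exp (-|x| * a)) (by fun_prop)
    (2 / a ^ 2) fun x => ?_, fun x hx => ?_⟩
  · rw [Real.norm_of_nonneg (by positivity)]
    exact sq_mul_exp_neg_mul_le (abs_nonneg x) ha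
  · simp [abs_of_nonneg hx]

lemma mul_exp_neg_mul_sub_le {x a u v : ℝ} (hx : 0 ≤ x) (hu : a ≤ u) (hv : a ≤ v) :
    (v - u) * (Real.exp (-x * u) - Real.exp (-x * v)) ≤
      x * Real.exp (-x * a) * (v - u) ^ 2 := by
  wlog huv : u ≤ v generalizing u v
  · linarith [this hv hu (le_of_not_ge huv)]
  have hle : Real.exp (-x * u) - Real.exp (-x * v) ≤ x * Real.exp (-x * a) * (v - u) := by
    have hmono : Real.exp (-x * u) ≤ Real.exp (-x * a) := Real.exp_le_exp.2 (by nlinarith)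
    have := mul_le_mul_of_nonneg_left hmono (mul_nonneg hx (sub_nonneg.2 huv))
    linarith [exp_neg_mul_tangent_le x u v]
  linarith [mul_le_mul_of_nonneg_left hle (sub_nonneg.2 huv)]

section Definitions

variable {Ω : Type*} [MeasurableSpace Ω] (P : Measure Ω) (X : Ω → ℝ)

/-- The size-biased Laplace exponent `φ₁(t) = E[X (1 - e^{-X t})]` of a random variable `X`. -/
noncomputable def phiOne (t : ℝ) : ℝ :=
  ∫ ω, X ω * (1 - Real.exp (-(X ω) * t)) ∂P

/-- `φ₁'(t) = E[X² e^{-X t}]`, the derivative of `phiOne` obtained by differentiating under the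
expectation; it enters through `phiOne_le_tangent` and `phiOne_tangent_sub_le`. -/
noncomputable def phiOneDeriv (t : ℝ) : ℝ :=
  ∫ ω, X ω ^ 2 * Real.exp (-(X ω) * t) ∂P

/-- The first time `θ(λ)` at which `t ↦ φ₁(λ t) - t` becomes negative; it is `0` by convention
if that never happens. -/
noncomputable def theta (lam : ℝ) : ℝ :=
  sInf {t | 0 < t ∧ phiOne P X (lam * t) - t < 0}

/-- Minus the slope `β(λ) = 1 - λ φ₁'(λ θ(λ))` of `t ↦ φ₁(λ t) - t` at `θ(λ)`. -/
noncomputable def beta (lam : ℝ) : ℝ :=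
  1 - lam * phiOneDeriv P X (lam * theta P X lam)

end Definitions

section Moments

variable {Ω : Type*} [MeasurableSpace Ω] {P : Measure Ω} {X : Ω → ℝ}

lemma phiOne_zero : phiOne P X 0 = 0 := by simp [phiOne]

lemma integrable_phiOne (hX : Integrable X P) (hX0 : 0 ≤ᵐ[P] X) {t : ℝ} (ht : 0 ≤ t) :
    Integrable (fun ω => X ω * (1 - Real.exp (-(X ω) * t))) P := by
  have := hX.aemeasurable
  refine hX.mono (AEMeasurable.aestronglyMeasurable (by fun_prop)) ?_
  filter_upwards [hX0] with ω hω
  have hexp : Real.exp (-(X ω) * t) ≤ 1 :=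
    Real.exp_le_one_iff.2 (mul_nonpos_of_nonpos_of_nonneg (neg_nonpos.2 hω) ht)
  rw [norm_mul]
  refine mul_le_of_le_one_right (norm_nonneg _) ?_
  rw [Real.norm_of_nonneg (sub_nonneg.2 hexp)]
  linarith [Real.exp_pos (-(X ω) * t)]

lemma phiOne_le_integral (hX : Integrable X P) (hX0 : 0 ≤ᵐ[P] X) {t : ℝ} (ht : 0 ≤ t) :
    phiOne P X t ≤ ∫ ω, X ω ∂P := by
  refine integral_mono_ae (integrable_phiOne hX hX0 ht) hX ?_
  filter_upwards [hX0] with ω hω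
  exact mul_le_of_le_one_right hω (by linarith [Real.exp_pos (-(X ω) * t)])

lemma concaveOn_phiOne (hX : Integrable X P) (hX0 : 0 ≤ᵐ[P] X) :
    ConcaveOn ℝ (Ici 0) (phiOne P X) := by
  refine integral_concaveOn_of_integrand_ae (convex_Ici 0) ?_
    fun t ht => integrable_phiOne hX hX0 ht
  filter_upwards [hX0] with ω hω
  have hexp : ConvexOn ℝ (Ici 0) fun t => Real.exp (-(X ω) * t) :=
    (convexOn_exp.comp_linearMap (LinearMap.mulLeft ℝ (-(X ω)))).subset (subset_univ _)
      (convex_Ici 0)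
  exact ((concaveOn_const 1 (convex_Ici 0)).sub hexp).smul hω

lemma integrable_phiOneDeriv [IsFiniteMeasure P] (hX : AEMeasurable X P) (hX0 : 0 ≤ᵐ[P] X)
    {t : ℝ} (ht : 0 < t) : Integrable (fun ω => X ω ^ 2 * Real.exp (-(X ω) * t)) P := by
  refine .of_bound (AEMeasurable.aestronglyMeasurable (by fun_prop)) (2 / t ^ 2) ?_
  filter_upwards [hX0] with ω hω
  rw [Real.norm_of_nonneg (by positivity)]
  exact sq_mul_exp_neg_mul_le hω ht

lemma phiOne_le_tangent [IsFiniteMeasure P] (hX : Integrable X P) (hX0 : 0 ≤ᵐ[P] X) {u v : ℝ}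
    (hu : 0 < u) (hv : 0 ≤ v) :
    phiOne P X v ≤ phiOne P X u + phiOneDeriv P X u * (v - u) := by
  have hφu := integrable_phiOne hX hX0 hu.le
  have hgu := (integrable_phiOneDeriv hX.aemeasurable hX0 hu).mul_const (v - u)
  rw [phiOneDeriv, ← integral_mul_const, phiOne, phiOne, ← integral_add hφu hgu]
  refine integral_mono_ae (integrable_phiOne hX hX0 hv) (hφu.add hgu) ?_
  filter_upwards [hX0] with ω hω
  linarith [mul_le_mul_of_nonneg_left (exp_neg_mul_tangent_le (X ω) u v) hω]

lemma phiOne_tangent_sub_le [IsFiniteMeasure P] (hX : Integrable X P) (hX0 : 0 ≤ᵐ[P] X)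
    {a u v : ℝ} (ha : 0 < a) (hu : a ≤ u) (hv : a ≤ v) :
    phiOne P X u + phiOneDeriv P X u * (v - u) - 2 / a ^ 2 * (∫ ω, X ω ∂P) * (v - u) ^ 2 ≤
      phiOne P X v := by
  have hφu := integrable_phiOne hX hX0 (ha.le.trans hu)
  have hφv := integrable_phiOne hX hX0 (ha.le.trans hv)
  have hgu := (integrable_phiOneDeriv hX.aemeasurable hX0 (ha.trans_le hu)).mul_const (v - u)
  have hC := (hX.const_mul (2 / a ^ 2)).mul_const ((v - u) ^ 2)
  rw [sub_le_iff_le_add, phiOneDeriv, ← integral_mul_const, ← integral_const_mul,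
    ← integral_mul_const, phiOne, phiOne, ← integral_add hφu hgu, ← integral_add hφv hC]
  refine integral_mono_ae (hφu.add hgu) (hφv.add hC) ?_
  filter_upwards [hX0] with ω hω
  have hgap : (v - u) * (Real.exp (-(X ω) * u) - Real.exp (-(X ω) * v)) * X ω ≤
      2 / a ^ 2 * (v - u) ^ 2 := calc
    _ ≤ X ω * Real.exp (-(X ω) * a) * (v - u) ^ 2 * X ω :=
      mul_le_mul_of_nonneg_right (mul_exp_neg_mul_sub_le hω hu hv) hω
    _ = X ω ^ 2 * Real.exp (-(X ω) * a) * (v - u) ^ 2 := by ring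
    _ ≤ 2 / a ^ 2 * (v - u) ^ 2 :=
      mul_le_mul_of_nonneg_right (sq_mul_exp_neg_mul_le hω ha) (sq_nonneg _)
  have htangent := mul_le_mul_of_nonneg_left (exp_neg_mul_tangent_le (X ω) v u) hω
  linarith [mul_le_mul_of_nonneg_left hgap hω]

lemma tendsto_phiOneDeriv_zero (hX0 : 0 ≤ᵐ[P] X) (hX2 : MemLp X 2 P) :
    Tendsto (phiOneDeriv P X) (𝓝[>] 0) (𝓝 (∫ ω, X ω ^ 2 ∂P)) := by
  have := hX2.aemeasurable
  refine tendsto_integral_filter_of_dominated_convergence (fun ω => X ω ^ 2)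
    (.of_forall fun t => AEMeasurable.aestronglyMeasurable (by fun_prop)) ?_ hX2.integrable_sq
    (.of_forall fun ω => ?_)
  · filter_upwards [self_mem_nhdsWithin] with t (ht : 0 < t)
    filter_upwards [hX0] with ω hω
    rw [Real.norm_of_nonneg (by positivity)]
    exact mul_le_of_le_one_right (sq_nonneg _)
      (Real.exp_le_one_iff.2 (mul_nonpos_of_nonpos_of_nonneg (neg_nonpos.2 hω) ht.le))
  · have hcont : Continuous fun t => X ω ^ 2 * Real.exp (-(X ω) * t) := by fun_prop
    simpa using (hcont.tendsto 0).mono_left nhdsWithin_le_nhds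

lemma integral_le_one_add_integral_sq [IsProbabilityMeasure P] (hX2 : MemLp X 2 P) :
    ∫ ω, X ω ∂P ≤ 1 + ∫ ω, X ω ^ 2 ∂P := by
  have hsum : Integrable (fun ω => 1 + X ω ^ 2) P := (integrable_const 1).add hX2.integrable_sq
  calc ∫ ω, X ω ∂P ≤ ∫ ω, (1 + X ω ^ 2) ∂P :=
        integral_mono (hX2.integrable (by norm_num)) hsum fun ω => by
          dsimp only; linarith [sq_nonneg (X ω - 1), sq_nonneg (X ω)]
    _ = 1 + ∫ ω, X ω ^ 2 ∂P := by
        rw [integral_add (integrable_const 1) hX2.integrable_sq]; simp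

lemma integral_sq_pos [NeZero P] (hX0 : ∀ᵐ ω ∂P, 0 < X ω) (hX2 : Integrable (fun ω => X ω ^ 2) P) :
    0 < ∫ ω, X ω ^ 2 ∂P := by
  refine (integral_pos_iff_support_of_nonneg (fun ω => sq_nonneg _) hX2).2 ?_
  have : (Function.support fun ω => X ω ^ 2) =ᵐ[P] univ :=
    eventuallyEq_univ.2 <| hX0.mono fun ω hω => (pow_pos hω 2).ne'
  rw [measure_congr this]
  exact NeZero.pos _

lemma mul_theta {lam : ℝ} (hlam : 0 < lam) :
    lam * theta P X lam = sInf {u | 0 < u ∧ phiOne P X u - u / lam < 0} := by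
  rw [theta, ← smul_eq_mul, ← Real.sInf_smul_of_nonneg hlam.le]
  congr 1
  ext u
  rw [mem_smul_set_iff_inv_smul_mem₀ hlam.ne']
  simp only [mem_ofPred_eq, smul_eq_mul, mul_inv_cancel_left₀ hlam.ne', inv_pos.2 hlam,
    mul_pos_iff_of_pos_left, div_eq_inv_mul]

lemma concaveOn_phiOne_sub_div (hX : Integrable X P) (hX0 : 0 ≤ᵐ[P] X) {lam : ℝ}
    (hlam : 0 ≤ lam) : ConcaveOn ℝ (Ici 0) fun u => phiOne P X u - u / lam :=
  (concaveOn_phiOne hX hX0).sub <|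
    ((convexOn_id (convex_Ici 0)).smul (inv_nonneg.2 hlam)).congr fun u _ => by
      simp [div_eq_inv_mul]

lemma mul_le_phiOne_sub_div [IsFiniteMeasure P] (hX : Integrable X P) (hX0 : 0 ≤ᵐ[P] X)
    {δ κ lam : ℝ} (hδ : 0 < δ) (hderiv : 1 / lam + κ ≤ phiOneDeriv P X δ) :
    κ * δ ≤ phiOne P X δ - δ / lam := by
  have htangent := phiOne_le_tangent hX hX0 hδ le_rfl
  rw [phiOne_zero] at htangent
  have := mul_le_mul_of_nonneg_right hderiv hδ.le
  linarith [one_div_mul_eq_div lam δ]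

lemma phiOne_sub_div_neg (hX : Integrable X P) (hX0 : 0 ≤ᵐ[P] X) {A lam lam1 : ℝ}
    (hlam : 0 < lam) (hlam1 : lam ≤ lam1) (hA : ∫ ω, X ω ∂P ≤ A) :
    phiOne P X (lam1 * (A + 1)) - lam1 * (A + 1) / lam < 0 := by
  have hA0 : 0 ≤ A := (integral_nonneg_of_ae hX0).trans hA
  have hle : A + 1 ≤ lam1 * (A + 1) / lam := by
    rw [le_div_iff₀ hlam, mul_comm]
    gcongr
  have hT : 0 ≤ lam1 * (A + 1) := mul_nonneg (hlam.le.trans hlam1) (by positivity)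
  linarith [phiOne_le_integral hX hX0 hT]

lemma isArch_phiOne_sub_div [IsFiniteMeasure P] (hX : Integrable X P) (hX0 : 0 ≤ᵐ[P] X)
    {δ κ A lam lam1 : ℝ} (hδ : 0 < δ) (hκ : 0 ≤ κ) (hlam : 0 < lam) (hlam1 : lam ≤ lam1)
    (hderiv : 1 / lam + κ ≤ phiOneDeriv P X δ) (hA : ∫ ω, X ω ∂P ≤ A) :
    IsArch δ κ (lam1 * (A + 1)) (2 / (δ / 2) ^ 2 * A) (fun u => phiOne P X u - u / lam)
      (lam * theta P X lam) (beta P X lam / lam) := by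
  have hA0 : 0 ≤ A := (integral_nonneg_of_ae hX0).trans hA
  have hT : 0 < lam1 * (A + 1) := mul_pos (hlam.trans_le hlam1) (by positivity)
  have hconc := concaveOn_phiOne_sub_div hX hX0 hlam.le
  have hzero : phiOne P X 0 - 0 / lam = 0 := by simp [phiOne_zero]
  have hleft := mul_le_phiOne_sub_div hX hX0 hδ hderiv
  have hright := phiOne_sub_div_neg hX hX0 hlam hlam1 hA
  obtain ⟨hmem, hroot⟩ := sInf_neg_mem_Icc_and_eq_zero_of_concaveOn hconc hzero hδ
    ((mul_nonneg hκ hδ.le).trans hleft) hT hright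
  rw [← mul_theta hlam] at hmem hroot
  set θ := lam * theta P X lam
  have hθ : 0 < θ := hδ.trans_le hmem.1
  have hβ : beta P X lam / lam = 1 / lam - phiOneDeriv P X θ := by
    rw [beta, sub_div, mul_div_cancel_left₀ _ hlam.ne']
  have htangent (v : ℝ) : (1 / lam - phiOneDeriv P X θ) * (θ - v) =
      phiOne P X θ + phiOneDeriv P X θ * (v - θ) - v / lam := by
    rw [sub_eq_zero.1 hroot]; ring
  rw [hβ]
  refine ⟨hconc, hzero, hleft, hmem, fun v hv => ?_, fun v hv => ?_⟩
  · rw [htangent]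
    gcongr
    exact phiOne_le_tangent hX hX0 hθ hv
  · have hquad := phiOne_tangent_sub_le hX hX0 (half_pos hδ) (by linarith [hmem.1] : δ / 2 ≤ θ) hv
    have : 2 / (δ / 2) ^ 2 * (∫ ω, X ω ∂P) * (v - θ) ^ 2 ≤ 2 / (δ / 2) ^ 2 * A * (v - θ) ^ 2 := by
      gcongr
    rw [htangent]
    linarith

end Moments

section Convergence

variable {ι Ω' : Type*} {l : Filter ι} {Ω : ι → Type*} [∀ i, MeasurableSpace (Ω i)]
  [MeasurableSpace Ω'] {P : ∀ i, Measure (Ω i)} [∀ i, IsProbabilityMeasure (P i)] {P' : Measure Ω'}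
  [IsProbabilityMeasure P'] {X : ∀ i, Ω i → ℝ} {X' : Ω' → ℝ}

lemma tendstoInDistribution_iff_forall_integral_tendsto {E : Type*} [TopologicalSpace E]
    [MeasurableSpace E] [OpensMeasurableSpace E] {Y : ∀ i, Ω i → E} {Y' : Ω' → E}
    (hY : ∀ i, AEMeasurable (Y i) (P i)) (hY' : AEMeasurable Y' P') :
    TendstoInDistribution Y l Y' P P' ↔ ∀ f : BoundedContinuousFunction E ℝ,
      Tendsto (fun i => ∫ ω, f (Y i ω) ∂P i) l (𝓝 (∫ ω, f (Y' ω) ∂P')) := by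
  have hlaw : TendstoInDistribution Y l Y' P P' ↔ _ :=
    ⟨fun h => ProbabilityMeasure.tendsto_iff_forall_integral_tendsto.1 h.tendsto,
      fun h => ⟨hY, hY', ProbabilityMeasure.tendsto_iff_forall_integral_tendsto.2 h⟩⟩
  rw [hlaw]
  refine forall_congr' fun f => ?_
  simp only [ProbabilityMeasure.coe_mk]
  rw [integral_map hY' f.continuous.aestronglyMeasurable]
  simp_rw [integral_map (hY _) f.continuous.aestronglyMeasurable]

lemma tendsto_phiOneDeriv (hX0 : ∀ i, 0 ≤ᵐ[P i] X i) (hX'0 : 0 ≤ᵐ[P'] X')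
    (hdist : TendstoInDistribution X l X' P P') {t : ℝ} (ht : 0 < t) :
    Tendsto (fun i => phiOneDeriv (P i) (X i) t) l (𝓝 (phiOneDeriv P' X' t)) := by
  obtain ⟨f, hf⟩ := exists_boundedContinuousFunction_eq_sq_mul_exp ht
  have hlim := (tendstoInDistribution_iff_forall_integral_tendsto hdist.forall_aemeasurable
    hdist.aemeasurable_limit).1 hdist f
  rw [integral_congr_ae (hX'0.mono fun ω hω => hf (X' ω) hω)] at hlim
  exact hlim.congr fun i => integral_congr_ae ((hX0 i).mono fun ω hω => hf (X i ω) hω)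

lemma exists_eventually_add_le_phiOneDeriv (hX0 : ∀ i, 0 ≤ᵐ[P i] X i) (hX'0 : 0 ≤ᵐ[P'] X')
    (hdist : TendstoInDistribution X l X' P P') (hsq : MemLp X' 2 P') {m : ℝ}
    (hm : m < ∫ ω, X' ω ^ 2 ∂P') :
    ∃ δ > 0, ∃ κ > 0, ∀ᶠ i in l, m + κ ≤ phiOneDeriv (P i) (X i) δ := by
  obtain ⟨m', hmm', hm'⟩ := exists_between hm
  obtain ⟨δ, hδm', hδ⟩ := (((tendsto_phiOneDeriv_zero hX'0 hsq).eventually_const_lt hm').and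
    self_mem_nhdsWithin).exists
  refine ⟨δ, hδ, m' - m, sub_pos.2 hmm', ?_⟩
  filter_upwards [(tendsto_phiOneDeriv hX0 hX'0 hdist hδ).eventually_const_lt hδm'] with i hi
  linarith

lemma exists_eventually_isArch (hX0 : ∀ i, 0 ≤ᵐ[P i] X i) (hX'0 : 0 ≤ᵐ[P'] X')
    (hdist : TendstoInDistribution X l X' P P') (hX : ∀ i, Integrable (X i) (P i))
    (hbdd : IsBoundedUnder (· ≤ ·) l fun i => ∫ ω, X i ω ∂P i) (hsq : MemLp X' 2 P')
    {lam0 lam1 : ℝ} (hlam0 : 0 < lam0) (hcrit : 1 < lam0 * ∫ ω, X' ω ^ 2 ∂P')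
    (hlam : lam0 ≤ lam1) :
    ∃ δ > 0, ∃ c > 0, ∃ T > 0, ∃ C, ∀ᶠ i in l, ∀ lam ∈ Icc lam0 lam1,
      IsArch δ c T C (fun u => phiOne (P i) (X i) u - u / lam)
        (lam * theta (P i) (X i) lam) (beta (P i) (X i) lam / lam) := by
  obtain ⟨δ, hδ, κ, hκ, hderiv⟩ := exists_eventually_add_le_phiOneDeriv hX0 hX'0 hdist hsq
    ((div_lt_iff₀' hlam0).2 hcrit)
  obtain ⟨A, hA⟩ := hbdd.eventually_le
  refine ⟨δ, hδ, κ, hκ, lam1 * (max A 0 + 1), mul_pos (hlam0.trans_le hlam) (by positivity),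
    2 / (δ / 2) ^ 2 * max A 0, ?_⟩
  filter_upwards [hderiv, hA] with i hi hAi lam hmem
  exact isArch_phiOne_sub_div (hX i) (hX0 i) hδ hκ.le (hlam0.trans_le hmem.1) hmem.2
    ((add_le_add_left (one_div_le_one_div_of_le hlam0 hmem.1) κ).trans hi)
    (hAi.trans (le_max_left A 0))

theorem stmt_1_general (hX0 : ∀ i, 0 ≤ᵐ[P i] X i) (hX'0 : 0 ≤ᵐ[P'] X')
    (hdist : TendstoInDistribution X l X' P P') (hX : ∀ i, Integrable (X i) (P i))
    (hbdd : IsBoundedUnder (· ≤ ·) l fun i => ∫ ω, X i ω ∂P i) (hsq : MemLp X' 2 P')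
    {r : ι → ℝ} (hr : Tendsto r l atTop) {ψ : ℝ → ℝ} (hψ : ContinuousOn ψ (Ici 0))
    (hψ0 : ψ 0 = 0) {Δ : ι → ℝ → ℝ}
    (hΔ : ∀ K > 0, TendstoUniformlyOn (fun i s => r i * Δ i s) (fun _ => 0) l (Icc 0 K))
    {lam0 lam1 ε : ℝ} (hcrit : 1 < lam0 * ∫ ω, X' ω ^ 2 ∂P') (hlam : lam0 ≤ lam1) (hε : 0 < ε) :
    ∀ᶠ i in l, ∀ lam ∈ Icc lam0 lam1, ∀ s, ε / r i ≤ s →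
      s ≤ theta (P i) (X i) lam +
        (ψ (lam * theta (P i) (X i) lam) - ε) / (beta (P i) (X i) lam * r i) →
      0 < (phiOne (P i) (X i) (lam * s) - s) + (r i)⁻¹ * ψ (lam * s) + Δ i (lam * s) := by
  have hlam0 : 0 < lam0 :=
    pos_of_mul_pos_left (one_pos.trans hcrit) (integral_nonneg fun ω => sq_nonneg (X' ω))
  obtain ⟨δ, hδ, c, hc, T, hT, C, harch⟩ :=
    exists_eventually_isArch hX0 hX'0 hdist hX hbdd hsq hlam0 hcrit hlam
  obtain ⟨η, hη, hbound⟩ := exists_eventually_lt_of_isArch (C := C) hδ hc hT hψ hψ0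
    (mul_pos hlam0 hε) hε
  filter_upwards [hr.eventually_gt_atTop 0, hr.eventually hbound, harch,
    Metric.tendstoUniformlyOn_iff.1 (hΔ (T + 1) (by positivity)) η hη]
    with i hri hbound_i harch_i hΔi lam hmem s hs₀ hs₁
  have hlampos : 0 < lam := hlam0.trans_le hmem.1
  have hu₀ : lam0 * ε / r i ≤ lam * s := by
    rw [mul_div_assoc]
    exact mul_le_mul hmem.1 hs₀ (by positivity) hlampos.le
  have hu₁ : lam * s ≤ lam * theta (P i) (X i) lam + (ψ (lam * theta (P i) (X i) lam) - ε) /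
      (beta (P i) (X i) lam / lam * r i) := by
    rw [div_mul_eq_mul_div, div_div_eq_mul_div, mul_comm _ lam, mul_div_assoc, ← mul_add]
    exact mul_le_mul_of_nonneg_left hs₁ hlampos.le
  obtain ⟨hmem_u, hlower⟩ := hbound_i _ _ _ (harch_i lam hmem) _ hu₀ hu₁
  have hΔ_u : |r i * Δ i (lam * s)| < η := by simpa [Real.dist_eq] using hΔi _ hmem_u
  have hscaled : 0 < r i * (phiOne (P i) (X i) (lam * s) - s) + ψ (lam * s) +
      r i * Δ i (lam * s) := by
    rw [mul_div_cancel_left₀ s hlampos.ne'] at hlower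
    linarith [neg_lt_of_abs_lt hΔ_u]
  refine pos_of_mul_pos_right ?_ hri.le
  rwa [mul_add, mul_add, mul_inv_cancel_left₀ hri.ne']

end Convergence

/-- Proposition 3.1 (deterministic content): the walk `H_n` is strictly positive on
the stated interval, uniformly over `λ ∈ [λ₀, λ₁]`, for all large `n`. -/
theorem stmt_1
    {Ω : Type*} [MeasurableSpace Ω] (P : Measure Ω) [IsProbabilityMeasure P]
    (W : Ω → ℝ) (Wn : ℕ → Ω → ℝ)
    (hWmeas : Measurable W) (hWnmeas : ∀ n, Measurable (Wn n))
    (hWpos : ∀ᵐ ω ∂P, 0 < W ω) (hWnpos : ∀ n, ∀ᵐ ω ∂P, 0 < Wn n ω)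
    -- convergence in distribution of `Wₙ` to `W`
    (hdist : ∀ f : BoundedContinuousFunction ℝ ℝ,
      Tendsto (fun n => ∫ ω, f (Wn n ω) ∂P) atTop (𝓝 (∫ ω, f (W ω) ∂P)))
    -- second moments are finite and converge
    (hW2 : Integrable (fun ω => (W ω) ^ 2) P)
    (hWn2 : ∀ n, Integrable (fun ω => (Wn n ω) ^ 2) P)
    (hmom : Tendsto (fun n => ∫ ω, (Wn n ω) ^ 2 ∂P) atTop (𝓝 (∫ ω, (W ω) ^ 2 ∂P)))
    -- `λ_crit = 1 / E[W²]`
    (lamCrit : ℝ) (hlamCrit : lamCrit = (∫ ω, (W ω) ^ 2 ∂P)⁻¹)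
    -- `φ₁⁽ⁿ⁾(t) = E[Wₙ (1 - e^{-Wₙ t})]`
    (φ1n : ℕ → ℝ → ℝ)
    (hφ1n : ∀ n t, φ1n n t = ∫ ω, Wn n ω * (1 - Real.exp (-(Wn n ω) * t)) ∂P)
    -- `θ⁽ⁿ⁾(λ) = inf {t > 0 : φ₁⁽ⁿ⁾(λ t) - t < 0}`
    (θn : ℕ → ℝ → ℝ)
    (hθn : ∀ n lam, θn n lam = sInf {t : ℝ | 0 < t ∧ φ1n n (lam * t) - t < 0})
    -- `β⁽ⁿ⁾(λ) = 1 - λ E[Wₙ² e^{-Wₙ λ θ⁽ⁿ⁾(λ)}]`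
    (βn : ℕ → ℝ → ℝ)
    (hβn : ∀ n lam, βn n lam =
      1 - lam * ∫ ω, (Wn n ω) ^ 2 * Real.exp (-(Wn n ω) * (lam * θn n lam)) ∂P)
    -- `ψ` continuous with `ψ(0) = 0`
    (ψ : ℝ → ℝ) (hψcont : Continuous ψ) (hψ0 : ψ 0 = 0)
    -- `√n · sup_{0 ≤ s ≤ K} |Δₙ(s)| → 0` for every `K > 0`
    (Δ : ℕ → ℝ → ℝ)
    (hΔ : ∀ K > (0:ℝ),
      TendstoUniformlyOn (fun (n : ℕ) s => Real.sqrt n * Δ n s) (fun _ => 0) atTop (Icc 0 K))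
    -- `Hₙ(t, λ) = (φ₁⁽ⁿ⁾(λ t) - t) + n^{-1/2} ψ(λ t) + Δₙ(λ t)`
    (H : ℕ → ℝ → ℝ → ℝ)
    (hH : ∀ n t lam, H n t lam =
      (φ1n n (lam * t) - t) + (Real.sqrt n)⁻¹ * ψ (lam * t) + Δ n (lam * t)) :
    ∀ lam0 lam1 : ℝ, lamCrit < lam0 → lam0 ≤ lam1 → ∀ ε > (0:ℝ),
      ∃ N : ℕ, ∀ n ≥ N, ∀ lam ∈ Icc lam0 lam1, ∀ s : ℝ,
        ε / Real.sqrt n ≤ s →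
        s ≤ θn n lam + (ψ (lam * θn n lam) - ε) / (βn n lam * Real.sqrt n) →
        0 < H n s lam := by
  intro lam0 lam1 hlam0 hlam ε hε
  obtain rfl : φ1n = fun n => phiOne P (Wn n) := funext₂ hφ1n
  obtain rfl : θn = fun n => theta P (Wn n) := funext₂ hθn
  obtain rfl : βn = fun n => beta P (Wn n) := funext₂ hβn
  have hW : MemLp W 2 P := (memLp_two_iff_integrable_sq hWmeas.aestronglyMeasurable).2 hW2
  have hWn (n : ℕ) : MemLp (Wn n) 2 P :=
    (memLp_two_iff_integrable_sq (hWnmeas n).aestronglyMeasurable).2 (hWn2 n)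
  have hdist' : TendstoInDistribution Wn atTop W (fun _ => P) P :=
    (tendstoInDistribution_iff_forall_integral_tendsto (fun n => (hWnmeas n).aemeasurable)
      hWmeas.aemeasurable).2 hdist
  have hmean : IsBoundedUnder (· ≤ ·) atTop fun n => ∫ ω, Wn n ω ∂P :=
    (hmom.const_add 1).isBoundedUnder_le.mono_le
      (.of_forall fun n => integral_le_one_add_integral_sq (hWn n))
  have hcrit : 1 < lam0 * ∫ ω, W ω ^ 2 ∂P :=
    (inv_lt_iff_one_lt_mul₀ (integral_sq_pos hWpos hW2)).1 (hlamCrit ▸ hlam0)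
  simp only [hH]
  exact eventually_atTop.1 <| stmt_1_general (fun n => (hWnpos n).mono fun _ => le_of_lt)
    (hWpos.mono fun _ => le_of_lt) hdist' (fun n => (hWn n).integrable one_le_two) hmean hW
    (Real.tendsto_sqrt_atTop.comp tendsto_natCast_atTop_atTop) hψcont.continuousOn hψ0 hΔ hcrit
    hlam hε
end

section
/- sup_{λ > λ_crit} |ρ^{(n)}(λ) − ρ(λ)| → 0 and sup_{λ > λ_crit} |β^{(n)}(λ) − β(λ)| → 0 as n → ∞. -/
open MeasureTheory Filter Topology Set

/-!
Put `x(λ) = λ θ(λ)` and `x⁽ⁿ⁾(λ) = λ θ⁽ⁿ⁾(λ)`. Uniform convergence is tested along ultrafilters in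
the pair `(n, λ)`, along which `x(λ)` converges in `[0, ∞]`. Since `φ₁(s) / s` is strictly
decreasing and `φ₁⁽ⁿ⁾ → φ₁` pointwise, `x⁽ⁿ⁾(λ)` has the same limit. The Laplace transforms
`𝔼[W_n^p e^{-W_n s}]`, `p ≤ 2`, are antitone in `s` and converge pointwise to a continuous limit, so
they converge along every `s_n → y ∈ [0, ∞]`; this settles `ρ`. For `β` it remains to control the
factor `λ`, using `λ φ₁(s) < s` for `s > x(λ)`: this bounds `λ` when the limit is finite, and when
it is infinite it gives `λ 𝔼[W_n² e^{-W_n x}] ≤ 2 𝔼[W_n e^{-W_n x / 2}] / φ₁⁽ⁿ⁾(2x) → 0` at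
`x = x⁽ⁿ⁾(λ)`.
-/

lemma integral_lt_integral_of_ae_lt {α : Type*} [MeasurableSpace α] {m : Measure α} [NeZero m]
    {f g : α → ℝ} (hf : Integrable f m) (hg : Integrable g m) (hfg : ∀ᵐ x ∂m, f x < g x) :
    ∫ x, f x ∂m < ∫ x, g x ∂m := by
  have hle : f ≤ᵐ[m] g := hfg.mono fun _ => le_of_lt
  refine (integral_mono_ae hf hg hle).lt_of_ne fun heq => ?_
  obtain ⟨x, hlt, hx⟩ := (hfg.and ((integral_eq_iff_of_ae_le hf hg hle).mp heq)).exists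
  exact hlt.ne hx

section WeakConvergence

variable {ι E : Type*} [TopologicalSpace E] [MeasurableSpace E] [OpensMeasurableSpace E]
  {l : Filter ι} {ν : ι → ProbabilityMeasure E} {μ : ProbabilityMeasure E}

lemma tendsto_integral_min_natCast {α : Type*} [MeasurableSpace α] {m : Measure α} {g : α → ℝ}
    (hg : Integrable g m) (hg0 : ∀ x, 0 ≤ g x) :
    Tendsto (fun K : ℕ => ∫ x, min (g x) K ∂m) atTop (𝓝 (∫ x, g x ∂m)) := by
  refine tendsto_integral_of_dominated_convergence g
    (fun K => hg.aestronglyMeasurable.inf aestronglyMeasurable_const) hg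
    (fun K => .of_forall fun x => ?_) (.of_forall fun x => ?_)
  · rw [Real.norm_of_nonneg (le_min (hg0 x) K.cast_nonneg)]
    exact min_le_left _ _
  · refine tendsto_const_nhds.congr' ?_
    filter_upwards [eventually_ge_atTop ⌈g x⌉₊] with K hK
    exact (min_eq_left (Nat.ceil_le.mp hK)).symm

lemma eventually_lt_integral_of_tendsto (hν : Tendsto ν l (𝓝 μ)) {g : E → ℝ} (hg : Continuous g)
    (hg0 : ∀ x, 0 ≤ g x) (hgμ : Integrable g μ) (hgν : ∀ i, Integrable g (ν i)) {c : ℝ}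
    (hc : c < ∫ x, g x ∂μ) : ∀ᶠ i in l, c < ∫ x, g x ∂(ν i) := by
  obtain ⟨K, hK⟩ := ((tendsto_integral_min_natCast hgμ hg0).eventually_const_lt hc).exists
  have hmin_nonneg : ∀ x, 0 ≤ min (g x) K := fun x => le_min (hg0 x) K.cast_nonneg
  let gK : BoundedContinuousFunction E ℝ :=
    .ofNormedAddCommGroup (fun x => min (g x) K) (hg.min continuous_const) K fun x => by
      rw [Real.norm_of_nonneg (hmin_nonneg x)]
      exact min_le_right _ _
  have hlim := ProbabilityMeasure.tendsto_iff_forall_integral_tendsto.mp hν gK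
  filter_upwards [hlim.eventually_const_lt hK] with i hi
  exact hi.trans_le (integral_mono (gK.integrable _) (hgν i) fun x => min_le_left _ _)

lemma tendsto_integral_of_abs_le (hν : Tendsto ν l (𝓝 μ)) {f g : E → ℝ} (hf : Continuous f)
    (hg : Continuous g) (hfg : ∀ x, |f x| ≤ g x) (hgμ : Integrable g μ)
    (hgν : ∀ i, Integrable g (ν i))
    (hlim : Tendsto (fun i => ∫ x, g x ∂(ν i)) l (𝓝 (∫ x, g x ∂μ))) :
    Tendsto (fun i => ∫ x, f x ∂(ν i)) l (𝓝 (∫ x, f x ∂μ)) := by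
  have lower : ∀ f : E → ℝ, Continuous f → (∀ x, |f x| ≤ g x) → ∀ c < ∫ x, f x ∂μ,
      ∀ᶠ i in l, c < ∫ x, f x ∂(ν i) := by
    intro f hf hfg c hc
    have integrable_f {m : Measure E} (hm : Integrable g m) : Integrable f m :=
      hm.mono' hf.measurable.aestronglyMeasurable (.of_forall hfg)
    set δ := (∫ x, f x ∂μ - c) / 2 with hδ
    have hsum : ∀ᶠ i in l, ∫ x, (g x + f x) ∂μ - δ < ∫ x, (g x + f x) ∂(ν i) :=
      eventually_lt_integral_of_tendsto hν (g := fun x => g x + f x) (hg.add hf)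
        (fun x => by linarith [neg_le_of_abs_le (hfg x)]) (hgμ.add (integrable_f hgμ))
        (fun i => (hgν i).add (integrable_f (hgν i))) (by linarith)
    filter_upwards [hsum, hlim.eventually_lt_const (show _ < ∫ x, g x ∂μ + δ by linarith)]
      with i hi hgi
    rw [integral_add hgμ (integrable_f hgμ), integral_add (hgν i) (integrable_f (hgν i))] at hi
    linarith
  refine tendsto_order.mpr ⟨lower f hf hfg, fun c hc => ?_⟩
  have hneg := lower (fun x => -f x) hf.neg (fun x => (abs_neg (f x)).trans_le (hfg x)) (-c)
    (by rwa [integral_neg, neg_lt_neg_iff])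
  simpa only [integral_neg, neg_lt_neg_iff] using hneg

end WeakConvergence

/-- Monotonicity of the `F i` replaces equicontinuity. -/
lemma tendsto_apply_of_antitone {ι α β : Type*} [LinearOrder α] [TopologicalSpace α]
    [OrderTopology α] [DenselyOrdered α] [NoMinOrder α] [NoMaxOrder α] [LinearOrder β]
    [TopologicalSpace β] [OrderTopology β] {l : Filter ι} {F : ι → α → β} {G : α → β} {s : ι → α}
    {y : α} (hF : ∀ i, Antitone (F i)) (hFG : ∀ x, Tendsto (fun i => F i x) l (𝓝 (G x)))
    (hG : ContinuousAt G y) (hs : Tendsto s l (𝓝 y)) :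
    Tendsto (fun i => F i (s i)) l (𝓝 (G y)) := by
  refine tendsto_order.mpr ⟨fun c hc => ?_, fun c hc => ?_⟩
  · obtain ⟨b, hcb, hyb⟩ := (((hG.eventually_const_lt hc).filter_mono
      (nhdsWithin_le_nhds (s := Ioi y))).and self_mem_nhdsWithin).exists
    filter_upwards [(hFG b).eventually_const_lt hcb, hs.eventually_lt_const hyb] with i hi hsb
    exact hi.trans_le (hF i hsb.le)
  · obtain ⟨a, hac, hay⟩ := (((hG.eventually_lt_const hc).filter_mono
      (nhdsWithin_le_nhds (s := Iio y))).and self_mem_nhdsWithin).exists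
    filter_upwards [(hFG a).eventually_lt_const hac, hs.eventually_const_lt hay] with i hi has
    exact (hF i has.le).trans_lt hi

/-- The laws on `ℝ` carried by `[0, ∞)` with finite second moment, i.e. the possible laws of the
weights `W_n`. -/
structure IsWeightLaw (μ : Measure ℝ) : Prop where
  nonneg : ∀ᵐ w ∂μ, 0 ≤ w
  integrable_sq : Integrable (fun w => w ^ 2) μ

/-- The Laplace transform `𝔼[W^p e^{-Ws}]` of the `p`-th moment of a weight `W` with law `μ`. -/
noncomputable def laplaceMoment (p : ℕ) (μ : Measure ℝ) (s : ℝ) : ℝ :=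
  ∫ w, w ^ p * Real.exp (-w * s) ∂μ

/-- The function `φ_p(s) = 𝔼[W^p (1 - e^{-Ws})]` of a weight `W` with law `μ`. -/
noncomputable def laplaceDefect (p : ℕ) (μ : Measure ℝ) (s : ℝ) : ℝ :=
  ∫ w, w ^ p * (1 - Real.exp (-w * s)) ∂μ

lemma abs_pow_le_one_add_sq {p : ℕ} (hp : p ≤ 2) (w : ℝ) : |w ^ p| ≤ 1 + w ^ 2 := by
  rw [abs_pow, ← sq_abs w]
  interval_cases p <;> nlinarith [sq_nonneg (|w| - 1), abs_nonneg w]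

lemma abs_pow_mul_exp_le {w s : ℝ} (p : ℕ) (hw : 0 ≤ w) (hs : 0 ≤ s) :
    |w ^ p * Real.exp (-w * s)| ≤ |w ^ p| := by
  rw [abs_mul, Real.abs_exp]
  refine mul_le_of_le_one_right (abs_nonneg _) (Real.exp_le_one_iff.mpr ?_)
  rw [neg_mul]
  exact neg_nonpos.mpr (mul_nonneg hw hs)

lemma one_sub_exp_neg_mul_lt {w a b : ℝ} (hw : 0 < w) (ha : 0 < a) (hab : a < b) :
    (1 - Real.exp (-w * b)) * a < (1 - Real.exp (-w * a)) * b := by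
  have hb : 0 < b := ha.trans hab
  have hsecant := strictConvexOn_exp.secant_strict_mono (mem_univ 0) (mem_univ (-w * b))
    (mem_univ (-w * a)) (by simp [hw.ne', hb.ne']) (by simp [hw.ne', ha.ne']) (by nlinarith)
  rw [sub_zero, sub_zero, Real.exp_zero, neg_mul, neg_mul, div_neg, div_neg, neg_lt_neg_iff,
    div_lt_div_iff₀ (by positivity) (by positivity)] at hsecant
  rw [neg_mul, neg_mul]
  nlinarith

lemma mul_sq_mul_exp_le {w s : ℝ} (hw : 0 ≤ w) (hs : 0 ≤ s) :
    s * (w ^ 2 * Real.exp (-w * s)) ≤ w * Real.exp (-w * (s / 2)) := by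
  have hle : w * s ≤ Real.exp (w * s / 2) := by
    have := Real.quadratic_le_exp_of_nonneg (x := w * s / 2) (by positivity)
    nlinarith [sq_nonneg (w * s - 2)]
  calc s * (w ^ 2 * Real.exp (-w * s)) = w * (w * s * Real.exp (-w * s)) := by ring
    _ ≤ w * (Real.exp (w * s / 2) * Real.exp (-w * s)) := by gcongr
    _ = w * Real.exp (-w * (s / 2)) := by rw [← Real.exp_add]; ring_nf

section SingleLaw

variable {μ : Measure ℝ} {p : ℕ} {s a b : ℝ}

namespace IsWeightLaw

lemma laplaceMoment_nonneg (h : IsWeightLaw μ) : 0 ≤ laplaceMoment p μ s :=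
  integral_nonneg_of_ae <| h.nonneg.mono fun w hw => by positivity

lemma laplaceDefect_nonneg (h : IsWeightLaw μ) (hs : 0 ≤ s) : 0 ≤ laplaceDefect p μ s := by
  refine integral_nonneg_of_ae <| h.nonneg.mono fun w hw => mul_nonneg (by positivity) ?_
  rw [sub_nonneg, Real.exp_le_one_iff, neg_mul]
  exact neg_nonpos.mpr (mul_nonneg hw hs)

variable [IsFiniteMeasure μ]

lemma integrable_pow (h : IsWeightLaw μ) (hp : p ≤ 2) : Integrable (fun w => w ^ p) μ :=
  ((integrable_const 1).add h.integrable_sq).mono'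
    (by fun_prop) (.of_forall (abs_pow_le_one_add_sq hp))

lemma integrable_pow_mul_exp (h : IsWeightLaw μ) (hp : p ≤ 2) (hs : 0 ≤ s) :
    Integrable (fun w => w ^ p * Real.exp (-w * s)) μ :=
  (h.integrable_pow hp).mono (by fun_prop) <|
    h.nonneg.mono fun _ hw => abs_pow_mul_exp_le p hw hs

lemma integrable_pow_mul_one_sub_exp (h : IsWeightLaw μ) (hp : p ≤ 2) (hs : 0 ≤ s) :
    Integrable (fun w => w ^ p * (1 - Real.exp (-w * s))) μ := by
  simp only [mul_sub, mul_one]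
  exact (h.integrable_pow hp).sub (h.integrable_pow_mul_exp hp hs)

lemma laplaceDefect_eq (h : IsWeightLaw μ) (hp : p ≤ 2) (hs : 0 ≤ s) :
    laplaceDefect p μ s = laplaceMoment p μ 0 - laplaceMoment p μ s := by
  simp only [laplaceDefect, laplaceMoment, mul_sub, mul_one, mul_zero, Real.exp_zero]
  exact integral_sub (h.integrable_pow hp) (h.integrable_pow_mul_exp hp hs)

lemma antitoneOn_laplaceMoment (h : IsWeightLaw μ) (hp : p ≤ 2) :
    AntitoneOn (laplaceMoment p μ) (Ici 0) := by
  intro s hs t ht hst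
  refine integral_mono_ae (h.integrable_pow_mul_exp hp ht) (h.integrable_pow_mul_exp hp hs) ?_
  filter_upwards [h.nonneg] with w hw
  gcongr w ^ p * Real.exp ?_
  exact mul_le_mul_of_nonpos_left hst (neg_nonpos.mpr hw)

lemma antitone_laplaceMoment_max_zero (h : IsWeightLaw μ) (hp : p ≤ 2) :
    Antitone fun s => laplaceMoment p μ (max s 0) := fun _ _ hst =>
  h.antitoneOn_laplaceMoment hp (mem_Ici.mpr (le_max_right _ _))
    (mem_Ici.mpr (le_max_right _ _)) (max_le_max_right 0 hst)

lemma continuous_laplaceMoment_max_zero (h : IsWeightLaw μ) (hp : p ≤ 2) :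
    Continuous fun s => laplaceMoment p μ (max s 0) :=
  continuous_of_dominated (fun _ => by fun_prop)
    (fun s => h.nonneg.mono fun _ hw => abs_pow_mul_exp_le p hw (le_max_right s 0))
    (h.integrable_pow hp).abs (.of_forall fun _ => by fun_prop)

lemma tendsto_laplaceMoment_atTop_zero (h : IsWeightLaw μ) (hpos : ∀ᵐ w ∂μ, 0 < w) (hp : p ≤ 2) :
    Tendsto (laplaceMoment p μ) atTop (𝓝 0) := by
  rw [← integral_zero ℝ ℝ (μ := μ)]
  refine tendsto_integral_filter_of_dominated_convergence (fun w => |w ^ p|)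
    (.of_forall fun _ => by fun_prop) ?_ (h.integrable_pow hp).abs ?_
  · filter_upwards [eventually_ge_atTop 0] with s hs
    exact h.nonneg.mono fun _ hw => abs_pow_mul_exp_le p hw hs
  · filter_upwards [hpos] with w hw
    have hexp :=
      Real.tendsto_exp_atBot.comp (tendsto_id.const_mul_atTop_of_neg (neg_lt_zero.mpr hw))
    simpa using hexp.const_mul (w ^ p)

lemma mul_laplaceMoment_two_le (h : IsWeightLaw μ) (hs : 0 ≤ s) :
    s * laplaceMoment 2 μ s ≤ laplaceMoment 1 μ (s / 2) := by
  rw [laplaceMoment, ← integral_const_mul]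
  refine integral_mono_ae ((h.integrable_pow_mul_exp le_rfl hs).const_mul s)
    (h.integrable_pow_mul_exp one_le_two (by positivity)) ?_
  filter_upwards [h.nonneg] with w hw
  simpa only [pow_one] using mul_sq_mul_exp_le hw hs

lemma laplaceDefect_one_mul_le (h : IsWeightLaw μ) (ha : 0 < a) (hab : a < b) :
    laplaceDefect 1 μ b * a ≤ laplaceDefect 1 μ a * b := by
  rw [laplaceDefect, laplaceDefect, ← integral_mul_const, ← integral_mul_const]
  refine integral_mono_ae
    ((h.integrable_pow_mul_one_sub_exp one_le_two (ha.trans hab).le).mul_const a)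
    ((h.integrable_pow_mul_one_sub_exp one_le_two ha.le).mul_const b) ?_
  filter_upwards [h.nonneg] with w hw
  rcases hw.eq_or_lt with rfl | hw
  · simp
  · simpa only [mul_assoc] using
      mul_le_mul_of_nonneg_left (one_sub_exp_neg_mul_lt hw ha hab).le (pow_nonneg hw.le 1)

lemma laplaceDefect_one_mul_lt [NeZero μ] (h : IsWeightLaw μ) (hpos : ∀ᵐ w ∂μ, 0 < w) (ha : 0 < a)
    (hab : a < b) : laplaceDefect 1 μ b * a < laplaceDefect 1 μ a * b := by
  have hlt : ∀ᵐ w ∂μ,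
      w ^ 1 * (1 - Real.exp (-w * b)) * a < w ^ 1 * (1 - Real.exp (-w * a)) * b := by
    filter_upwards [hpos] with w hw
    simpa only [mul_assoc] using
      mul_lt_mul_of_pos_left (one_sub_exp_neg_mul_lt hw ha hab) (pow_pos hw 1)
  rw [laplaceDefect, laplaceDefect, ← integral_mul_const, ← integral_mul_const]
  exact integral_lt_integral_of_ae_lt
    ((h.integrable_pow_mul_one_sub_exp one_le_two (ha.trans hab).le).mul_const a)
    ((h.integrable_pow_mul_one_sub_exp one_le_two ha.le).mul_const b) hlt

lemma laplaceDefect_one_pos [NeZero μ] (h : IsWeightLaw μ) (hpos : ∀ᵐ w ∂μ, 0 < w) (hs : 0 < s) :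
    0 < laplaceDefect 1 μ s := by
  have hlt := h.laplaceDefect_one_mul_lt hpos hs (lt_two_mul_self hs)
  have h0 := h.laplaceDefect_nonneg (p := 1) (s := 2 * s) (by positivity)
  exact pos_of_mul_pos_left ((mul_nonneg h0 hs.le).trans_lt hlt) (by positivity)

end IsWeightLaw

end SingleLaw

/-- `θ(λ)` for weights of law `μ`, the largest fixed point of `t ↦ φ₁(λt)`; for `λ > 0` it is `0`
up to the critical point. -/
noncomputable def survivalRoot (μ : Measure ℝ) (lam : ℝ) : ℝ :=
  sInf {t : ℝ | 0 < t ∧ laplaceDefect 1 μ (lam * t) - t < 0}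

/-- `λ θ(λ)`, the argument at which all Laplace transforms are evaluated. -/
noncomputable def survivalTilt (μ : Measure ℝ) (lam : ℝ) : ℝ := lam * survivalRoot μ lam

/-- `ρ(λ) = φ₀(λ θ(λ))`, the survival probability of the branching process in which an individual of
weight `w` has Poisson many children, with intensity `λ w w' μ(dw')` over their weights `w'`. -/
noncomputable def survivalDensity (μ : Measure ℝ) (lam : ℝ) : ℝ :=
  laplaceDefect 0 μ (survivalTilt μ lam)

/-- `β(λ)`, minus the slope at `θ(λ)` of `t ↦ φ₁(λt) - t`. -/
noncomputable def slopeGap (μ : Measure ℝ) (lam : ℝ) : ℝ :=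
  1 - lam * laplaceMoment 2 μ (survivalTilt μ lam)

section Tilt

variable {μ ν : Measure ℝ} {lam s a b : ℝ}

lemma survivalTilt_nonneg (hlam : 0 ≤ lam) : 0 ≤ survivalTilt μ lam :=
  mul_nonneg hlam (Real.sInf_nonneg fun _ ht => ht.1.le)

lemma le_mul_laplaceDefect_of_lt_survivalTilt (hlam : 0 < lam) (hs : 0 < s)
    (h : s < survivalTilt μ lam) : s ≤ lam * laplaceDefect 1 μ s := by
  by_contra! hlt
  have hmem : survivalRoot μ lam ≤ s / lam := by
    refine csInf_le ⟨0, fun t ht => ht.1.le⟩ ⟨by positivity, ?_⟩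
    rwa [mul_div_cancel₀ _ hlam.ne', sub_neg, lt_div_iff₀' hlam]
  exact h.not_ge ((le_div_iff₀' hlam).mp hmem)

namespace IsWeightLaw

variable [IsFiniteMeasure μ]

lemma exists_laplaceDefect_sub_neg (hμ : IsWeightLaw μ) (hlam : 0 < lam) :
    {t : ℝ | 0 < t ∧ laplaceDefect 1 μ (lam * t) - t < 0}.Nonempty := by
  have hmean : 0 ≤ laplaceMoment 1 μ 0 := hμ.laplaceMoment_nonneg
  refine ⟨laplaceMoment 1 μ 0 + 1, by positivity, ?_⟩
  rw [hμ.laplaceDefect_eq one_le_two (by positivity)]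
  linarith [hμ.laplaceMoment_nonneg (p := 1) (s := lam * (laplaceMoment 1 μ 0 + 1))]

lemma mul_laplaceDefect_lt_of_survivalTilt_lt (hμ : IsWeightLaw μ) (hlam : 0 < lam)
    (h : survivalTilt μ lam < s) : lam * laplaceDefect 1 μ s < s := by
  obtain ⟨t, ⟨ht, hneg⟩, hts⟩ := exists_lt_of_csInf_lt (hμ.exists_laplaceDefect_sub_neg hlam)
    ((lt_div_iff₀' hlam).mpr h)
  have hs : 0 < s := (survivalTilt_nonneg hlam.le).trans_lt h
  have hratio := hμ.laplaceDefect_one_mul_le (mul_pos hlam ht) ((lt_div_iff₀' hlam).mp hts)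
  refine lt_of_mul_lt_mul_right ?_ ht.le
  calc lam * laplaceDefect 1 μ s * t = laplaceDefect 1 μ s * (lam * t) := by ring
    _ ≤ laplaceDefect 1 μ (lam * t) * s := hratio
    _ < t * s := mul_lt_mul_of_pos_right (sub_neg.mp hneg) hs
    _ = s * t := mul_comm t s

lemma le_survivalTilt_of_lt_survivalTilt (hμ : IsWeightLaw μ) (hlam : 0 < lam) (ha : 0 < a)
    (hab : a < b) (hlt : laplaceDefect 1 ν b * a < laplaceDefect 1 μ a * b)
    (hb : b < survivalTilt ν lam) : a ≤ survivalTilt μ lam := by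
  by_contra! hμa
  have hbν := le_mul_laplaceDefect_of_lt_survivalTilt hlam (ha.trans hab) hb
  have haμ := hμ.mul_laplaceDefect_lt_of_survivalTilt_lt hlam hμa
  refine lt_irrefl (b * a) ?_
  calc b * a ≤ lam * laplaceDefect 1 ν b * a := mul_le_mul_of_nonneg_right hbν ha.le
    _ = lam * (laplaceDefect 1 ν b * a) := mul_assoc _ _ _
    _ < lam * (laplaceDefect 1 μ a * b) := mul_lt_mul_of_pos_left hlt hlam
    _ = lam * laplaceDefect 1 μ a * b := (mul_assoc _ _ _).symm
    _ ≤ a * b := mul_le_mul_of_nonneg_right haμ.le (ha.trans hab).le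
    _ = b * a := mul_comm a b

lemma mul_laplaceMoment_two_survivalTilt_le (hμ : IsWeightLaw μ) (hlam : 0 < lam)
    (hx : 0 < survivalTilt μ lam) (hD : 0 < laplaceDefect 1 μ (2 * survivalTilt μ lam)) :
    lam * laplaceMoment 2 μ (survivalTilt μ lam) ≤
      2 * laplaceMoment 1 μ (survivalTilt μ lam / 2) /
        laplaceDefect 1 μ (2 * survivalTilt μ lam) := by
  have hfix := hμ.mul_laplaceDefect_lt_of_survivalTilt_lt hlam (lt_two_mul_self hx)
  have hL : 0 ≤ laplaceMoment 2 μ (survivalTilt μ lam) := hμ.laplaceMoment_nonneg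
  rw [le_div_iff₀ hD]
  calc lam * laplaceMoment 2 μ (survivalTilt μ lam) * laplaceDefect 1 μ (2 * survivalTilt μ lam)
    _ = lam * laplaceDefect 1 μ (2 * survivalTilt μ lam) *
          laplaceMoment 2 μ (survivalTilt μ lam) := mul_right_comm _ _ _
    _ ≤ 2 * survivalTilt μ lam * laplaceMoment 2 μ (survivalTilt μ lam) := by gcongr
    _ = 2 * (survivalTilt μ lam * laplaceMoment 2 μ (survivalTilt μ lam)) := mul_assoc _ _ _
    _ ≤ 2 * laplaceMoment 1 μ (survivalTilt μ lam / 2) := by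
      gcongr
      exact hμ.mul_laplaceMoment_two_le hx.le

end IsWeightLaw

end Tilt

/-- Convergence of weight laws under Assumption 1: weak convergence together with convergence of
the second moments. -/
structure TendstoWithSecondMoment {ι : Type*} (ν : ι → ProbabilityMeasure ℝ) (l : Filter ι)
    (μ : ProbabilityMeasure ℝ) : Prop where
  isWeightLaw : ∀ i, IsWeightLaw (ν i)
  isWeightLaw_lim : IsWeightLaw μ
  tendsto : Tendsto ν l (𝓝 μ)
  tendsto_sq : Tendsto (fun i => ∫ w, w ^ 2 ∂(ν i : Measure ℝ)) l (𝓝 (∫ w, w ^ 2 ∂(μ : Measure ℝ)))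

namespace TendstoWithSecondMoment

variable {ι κ : Type*} {l : Filter ι} {ν : ι → ProbabilityMeasure ℝ} {μ : ProbabilityMeasure ℝ}
  {p : ℕ} {lam s : ι → ℝ} {y : ℝ}

lemma comp (h : TendstoWithSecondMoment ν l μ) {k : Filter κ} {u : κ → ι} (hu : Tendsto u k l) :
    TendstoWithSecondMoment (fun j => ν (u j)) k μ where
  isWeightLaw j := h.isWeightLaw (u j)
  isWeightLaw_lim := h.isWeightLaw_lim
  tendsto := h.tendsto.comp hu
  tendsto_sq := h.tendsto_sq.comp hu

lemma const (hμ : IsWeightLaw μ) : TendstoWithSecondMoment (fun _ : ι => μ) l μ where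
  isWeightLaw _ := hμ
  isWeightLaw_lim := hμ
  tendsto := tendsto_const_nhds
  tendsto_sq := tendsto_const_nhds

lemma tendsto_integral_of_abs_le_one_add_sq (h : TendstoWithSecondMoment ν l μ) {f : ℝ → ℝ}
    (hf : Continuous f) (hf_le : ∀ w, |f w| ≤ 1 + w ^ 2) :
    Tendsto (fun i => ∫ w, f w ∂(ν i : Measure ℝ)) l (𝓝 (∫ w, f w ∂(μ : Measure ℝ))) := by
  have integral_one_add_sq {m : Measure ℝ} [IsProbabilityMeasure m] (hm : IsWeightLaw m) :
      ∫ w, (1 + w ^ 2) ∂m = 1 + ∫ w, w ^ 2 ∂m := by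
    simp [integral_add (integrable_const (1 : ℝ)) hm.integrable_sq]
  refine tendsto_integral_of_abs_le h.tendsto hf (by fun_prop) hf_le
    ((integrable_const 1).add h.isWeightLaw_lim.integrable_sq)
    (fun i => (integrable_const 1).add (h.isWeightLaw i).integrable_sq) ?_
  simp only [integral_one_add_sq h.isWeightLaw_lim, integral_one_add_sq (h.isWeightLaw _)]
  exact h.tendsto_sq.const_add 1

lemma tendsto_laplaceMoment_const (h : TendstoWithSecondMoment ν l μ) (hp : p ≤ 2) {t : ℝ}
    (ht : 0 ≤ t) : Tendsto (fun i => laplaceMoment p (ν i) t) l (𝓝 (laplaceMoment p μ t)) := by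
  have laplaceMoment_eq {m : Measure ℝ} (hm : IsWeightLaw m) :
      laplaceMoment p m t = ∫ w, w ^ p * Real.exp (-|w| * t) ∂m :=
    integral_congr_ae <| hm.nonneg.mono fun w hw => by simp only [abs_of_nonneg hw]
  simp only [laplaceMoment_eq h.isWeightLaw_lim, laplaceMoment_eq (h.isWeightLaw _)]
  refine h.tendsto_integral_of_abs_le_one_add_sq (by fun_prop) fun w => ?_
  calc |w ^ p * Real.exp (-|w| * t)| = |(|w| ^ p * Real.exp (-|w| * t))| := by
        simp only [abs_mul, abs_pow, abs_abs]
    _ ≤ |(|w| ^ p)| := abs_pow_mul_exp_le p (abs_nonneg w) ht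
    _ ≤ 1 + w ^ 2 := by simpa only [sq_abs] using abs_pow_le_one_add_sq hp |w|

lemma tendsto_laplaceMoment (h : TendstoWithSecondMoment ν l μ) (hp : p ≤ 2)
    (hs : ∀ᶠ i in l, 0 ≤ s i) (hy : 0 ≤ y) (hsy : Tendsto s l (𝓝 y)) :
    Tendsto (fun i => laplaceMoment p (ν i) (s i)) l (𝓝 (laplaceMoment p μ y)) := by
  have hmax := tendsto_apply_of_antitone
    (fun i => (h.isWeightLaw i).antitone_laplaceMoment_max_zero hp)
    (fun t => h.tendsto_laplaceMoment_const hp (le_max_right t 0))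
    (h.isWeightLaw_lim.continuous_laplaceMoment_max_zero hp).continuousAt hsy
  rw [max_eq_left hy] at hmax
  exact hmax.congr' (hs.mono fun i hi => by rw [max_eq_left hi])

lemma tendsto_laplaceMoment_of_atTop (h : TendstoWithSecondMoment ν l μ)
    (hpos : ∀ᵐ w ∂(μ : Measure ℝ), 0 < w) (hp : p ≤ 2) (hs : Tendsto s l atTop) :
    Tendsto (fun i => laplaceMoment p (ν i) (s i)) l (𝓝 0) := by
  refine tendsto_order.mpr ⟨fun c hc => .of_forall fun i =>
    hc.trans_le (h.isWeightLaw i).laplaceMoment_nonneg, fun c hc => ?_⟩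
  obtain ⟨b, hbc, hb⟩ := (((h.isWeightLaw_lim.tendsto_laplaceMoment_atTop_zero hpos
    hp).eventually_lt_const hc).and (eventually_ge_atTop 0)).exists
  filter_upwards [(h.tendsto_laplaceMoment_const hp hb).eventually_lt_const hbc,
    hs.eventually_ge_atTop b] with i hi hbs
  exact ((h.isWeightLaw i).antitoneOn_laplaceMoment hp hb (hb.trans hbs) hbs).trans_lt hi

lemma tendsto_laplaceDefect (h : TendstoWithSecondMoment ν l μ) (hp : p ≤ 2)
    (hs : ∀ᶠ i in l, 0 ≤ s i) (hy : 0 ≤ y) (hsy : Tendsto s l (𝓝 y)) :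
    Tendsto (fun i => laplaceDefect p (ν i) (s i)) l (𝓝 (laplaceDefect p μ y)) := by
  rw [h.isWeightLaw_lim.laplaceDefect_eq hp hy]
  refine ((h.tendsto_laplaceMoment_const hp le_rfl).sub
    (h.tendsto_laplaceMoment hp hs hy hsy)).congr' ?_
  exact hs.mono fun i hi => ((h.isWeightLaw i).laplaceDefect_eq hp hi).symm

lemma tendsto_laplaceDefect_of_atTop (h : TendstoWithSecondMoment ν l μ)
    (hpos : ∀ᵐ w ∂(μ : Measure ℝ), 0 < w) (hp : p ≤ 2) (hs : Tendsto s l atTop) :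
    Tendsto (fun i => laplaceDefect p (ν i) (s i)) l (𝓝 (laplaceMoment p μ 0)) := by
  rw [← sub_zero (laplaceMoment p μ 0)]
  refine ((h.tendsto_laplaceMoment_const hp le_rfl).sub
    (h.tendsto_laplaceMoment_of_atTop hpos hp hs)).congr' ?_
  filter_upwards [hs.eventually_ge_atTop 0] with i hi
  exact ((h.isWeightLaw i).laplaceDefect_eq hp hi).symm

lemma eventually_laplaceDefect_one_mul_lt (h : TendstoWithSecondMoment ν l μ)
    (hpos : ∀ᵐ w ∂(μ : Measure ℝ), 0 < w) {a b : ℝ} (ha : 0 < a) (hab : a < b) :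
    (∀ᶠ i in l, laplaceDefect 1 μ b * a < laplaceDefect 1 (ν i) a * b) ∧
      ∀ᶠ i in l, laplaceDefect 1 (ν i) b * a < laplaceDefect 1 μ a * b := by
  have hlt := h.isWeightLaw_lim.laplaceDefect_one_mul_lt hpos ha hab
  have hlim {t : ℝ} (ht : 0 ≤ t) :
      Tendsto (fun i => laplaceDefect 1 (ν i) t) l (𝓝 (laplaceDefect 1 μ t)) :=
    h.tendsto_laplaceDefect one_le_two (.of_forall fun _ => ht) ht tendsto_const_nhds
  exact ⟨((hlim ha.le).mul_const b).eventually_const_lt hlt,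
    ((hlim (ha.trans hab).le).mul_const a).eventually_lt_const hlt⟩

lemma tendsto_survivalTilt_of_atTop (h : TendstoWithSecondMoment ν l μ)
    (hpos : ∀ᵐ w ∂(μ : Measure ℝ), 0 < w) (hlam : ∀ᶠ i in l, 0 < lam i)
    (hx : Tendsto (fun i => survivalTilt μ (lam i)) l atTop) :
    Tendsto (fun i => survivalTilt (ν i) (lam i)) l atTop := by
  refine tendsto_atTop.mpr fun c => ?_
  have ha : 0 < max c 1 := by positivity
  have hab := lt_add_one (max c 1)
  filter_upwards [(h.eventually_laplaceDefect_one_mul_lt hpos ha hab).1, hlam,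
    hx.eventually_gt_atTop (max c 1 + 1)] with i hi hlam_i hxi
  exact (le_max_left c 1).trans
    ((h.isWeightLaw i).le_survivalTilt_of_lt_survivalTilt hlam_i ha hab hi hxi)

lemma tendsto_survivalTilt (h : TendstoWithSecondMoment ν l μ)
    (hpos : ∀ᵐ w ∂(μ : Measure ℝ), 0 < w) (hlam : ∀ᶠ i in l, 0 < lam i) (hy : 0 ≤ y)
    (hx : Tendsto (fun i => survivalTilt μ (lam i)) l (𝓝 y)) :
    Tendsto (fun i => survivalTilt (ν i) (lam i)) l (𝓝 y) := by
  refine tendsto_order.mpr ⟨fun c hc => ?_, fun c hc => ?_⟩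
  · rcases lt_or_ge c 0 with hc0 | hc0
    · filter_upwards [hlam] with i hlam_i
      exact hc0.trans_le (survivalTilt_nonneg hlam_i.le)
    · obtain ⟨a, hca, hay⟩ := exists_between hc
      obtain ⟨b, hab, hby⟩ := exists_between hay
      have ha : 0 < a := hc0.trans_lt hca
      filter_upwards [(h.eventually_laplaceDefect_one_mul_lt hpos ha hab).1, hlam,
        hx.eventually_const_lt hby] with i hi hlam_i hxi
      exact hca.trans_le
        ((h.isWeightLaw i).le_survivalTilt_of_lt_survivalTilt hlam_i ha hab hi hxi)
  · obtain ⟨b, hyb, hbc⟩ := exists_between hc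
    obtain ⟨a, hya, hab⟩ := exists_between hyb
    have ha : 0 < a := hy.trans_lt hya
    filter_upwards [(h.eventually_laplaceDefect_one_mul_lt hpos ha hab).2, hlam,
      hx.eventually_lt_const hya] with i hi hlam_i hxi
    by_contra! hcx
    exact hxi.not_ge (h.isWeightLaw_lim.le_survivalTilt_of_lt_survivalTilt hlam_i ha hab hi
      (hbc.trans_le hcx))

lemma tendsto_mul_laplaceMoment_two_of_atTop (h : TendstoWithSecondMoment ν l μ)
    (hpos : ∀ᵐ w ∂(μ : Measure ℝ), 0 < w) (hlam : ∀ᶠ i in l, 0 < lam i)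
    (hx : Tendsto (fun i => survivalTilt (ν i) (lam i)) l atTop) :
    Tendsto (fun i => lam i * laplaceMoment 2 (ν i) (survivalTilt (ν i) (lam i))) l (𝓝 0) := by
  have hmean : 0 < laplaceMoment 1 (μ : Measure ℝ) 0 := by
    have hD := h.isWeightLaw_lim.laplaceDefect_one_pos hpos one_pos
    rw [h.isWeightLaw_lim.laplaceDefect_eq one_le_two zero_le_one] at hD
    linarith [h.isWeightLaw_lim.laplaceMoment_nonneg (p := 1) (s := 1)]
  have hnum := (h.tendsto_laplaceMoment_of_atTop hpos one_le_two
    (hx.atTop_div_const two_pos)).const_mul 2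
  have hden := h.tendsto_laplaceDefect_of_atTop hpos one_le_two (hx.const_mul_atTop two_pos)
  have hquot := hnum.div hden hmean.ne'
  rw [mul_zero, zero_div] at hquot
  refine squeeze_zero' ?_ ?_ hquot
  · filter_upwards [hlam] with i hlam_i
    exact mul_nonneg hlam_i.le (h.isWeightLaw i).laplaceMoment_nonneg
  · filter_upwards [hlam, hx.eventually_gt_atTop 0, hden.eventually_const_lt hmean]
      with i hlam_i hxi hDi
    exact (h.isWeightLaw i).mul_laplaceMoment_two_survivalTilt_le hlam_i hxi hDi

lemma tendsto_mul_laplaceMoment_two_sub (h : TendstoWithSecondMoment ν l μ)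
    (hpos : ∀ᵐ w ∂(μ : Measure ℝ), 0 < w) (hlam : ∀ᶠ i in l, 0 < lam i) (hy : 0 ≤ y)
    (hx : Tendsto (fun i => survivalTilt μ (lam i)) l (𝓝 y)) :
    Tendsto (fun i => lam i * (laplaceMoment 2 (ν i) (survivalTilt (ν i) (lam i)) -
      laplaceMoment 2 μ (survivalTilt μ (lam i)))) l (𝓝 0) := by
  have tilt_nonneg (m : ι → Measure ℝ) : ∀ᶠ i in l, 0 ≤ survivalTilt (m i) (lam i) :=
    hlam.mono fun i hi => survivalTilt_nonneg hi.le
  have hdiff : Tendsto (fun i => laplaceMoment 2 (ν i) (survivalTilt (ν i) (lam i)) -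
      laplaceMoment 2 μ (survivalTilt μ (lam i))) l (𝓝 0) := by
    simpa only [sub_self] using (h.tendsto_laplaceMoment le_rfl (tilt_nonneg _) hy
      (h.tendsto_survivalTilt hpos hlam hy hx)).sub
      ((const h.isWeightLaw_lim).tendsto_laplaceMoment le_rfl (tilt_nonneg _) hy hx)
  have hD := h.isWeightLaw_lim.laplaceDefect_one_pos hpos (show 0 < y + 1 by linarith)
  have hlam_le : ∀ᶠ i in l, lam i ≤ (y + 1) / laplaceDefect 1 μ (y + 1) := by
    filter_upwards [hlam, hx.eventually_lt_const (lt_add_one y)] with i hlam_i hxi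
    exact (le_div_iff₀ hD).mpr
      (h.isWeightLaw_lim.mul_laplaceDefect_lt_of_survivalTilt_lt hlam_i hxi).le
  exact bdd_le_mul_tendsto_zero (hlam.mono fun _ => le_of_lt) hlam_le hdiff

end TendstoWithSecondMoment

section Ultrafilter

lemma tendstoUniformlyOn_of_forall_ultrafilter {ι α : Type*} {l : Filter ι} {F : ι → α → ℝ}
    {f : α → ℝ} {S : Set α}
    (h : ∀ U : Ultrafilter (ι × α), Tendsto Prod.fst (U : Filter (ι × α)) l →
      (∀ᶠ q in (U : Filter (ι × α)), q.2 ∈ S) →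
      Tendsto (fun q : ι × α => F q.1 q.2 - f q.2) U (𝓝 0)) :
    TendstoUniformlyOn F f l S := by
  rw [tendstoUniformlyOn_iff_tendsto, tendsto_uniformity_iff_dist_tendsto_zero,
    tendsto_iff_ultrafilter]
  intro U hU
  have hlim := h U (tendsto_fst.mono_left hU) (tendsto_principal.mp (tendsto_snd.mono_left hU))
  simpa only [dist_comm (f _), Real.dist_eq, abs_zero] using hlim.abs

lemma tendsto_atTop_or_exists_nhds_of_ultrafilter {κ : Type*} (U : Ultrafilter κ) {x : κ → ℝ}
    (hx : ∀ᶠ i in (U : Filter κ), 0 ≤ x i) :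
    Tendsto x U atTop ∨ ∃ y, 0 ≤ y ∧ Tendsto x U (𝓝 y) := by
  refine or_iff_not_imp_left.mpr fun hatTop => ?_
  obtain ⟨c, hc⟩ : ∃ c, ∀ᶠ i in (U : Filter κ), x i < c := by
    simpa only [tendsto_atTop, not_forall, ← Ultrafilter.eventually_not, not_le] using hatTop
  have hIcc : ∀ᶠ i in (U : Filter κ), x i ∈ Icc 0 c := hx.and (hc.mono fun _ => le_of_lt)
  obtain ⟨y, hy, hlim⟩ := isCompact_Icc.ultrafilter_le_nhds' (U.map x) hIcc
  exact ⟨y, hy.1, hlim⟩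

end Ultrafilter

namespace TendstoWithSecondMoment

variable {ι : Type*} {ν : ι → ProbabilityMeasure ℝ} {μ : ProbabilityMeasure ℝ} {lam : ι → ℝ}
  {U : Ultrafilter ι}

lemma tendsto_survivalDensity_sub (h : TendstoWithSecondMoment ν U μ)
    (hpos : ∀ᵐ w ∂(μ : Measure ℝ), 0 < w) (hlam : ∀ᶠ i in (U : Filter ι), 0 < lam i) :
    Tendsto (fun i => survivalDensity (ν i) (lam i) - survivalDensity μ (lam i)) U (𝓝 0) := by
  have hμ : TendstoWithSecondMoment (fun _ : ι => μ) U μ := const h.isWeightLaw_lim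
  have tilt_nonneg (m : ι → Measure ℝ) : ∀ᶠ i in (U : Filter ι), 0 ≤ survivalTilt (m i) (lam i) :=
    hlam.mono fun i hi => survivalTilt_nonneg hi.le
  rcases tendsto_atTop_or_exists_nhds_of_ultrafilter U (tilt_nonneg fun _ => μ)
    with hx | ⟨y, hy, hx⟩
  · simpa only [survivalDensity, sub_self] using (h.tendsto_laplaceDefect_of_atTop hpos zero_le_two
      (h.tendsto_survivalTilt_of_atTop hpos hlam hx)).sub
      (hμ.tendsto_laplaceDefect_of_atTop hpos zero_le_two hx)
  · simpa only [survivalDensity, sub_self] using (h.tendsto_laplaceDefect zero_le_two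
      (tilt_nonneg _) hy (h.tendsto_survivalTilt hpos hlam hy hx)).sub
      (hμ.tendsto_laplaceDefect zero_le_two (tilt_nonneg _) hy hx)

lemma tendsto_slopeGap_sub (h : TendstoWithSecondMoment ν U μ)
    (hpos : ∀ᵐ w ∂(μ : Measure ℝ), 0 < w) (hlam : ∀ᶠ i in (U : Filter ι), 0 < lam i) :
    Tendsto (fun i => slopeGap (ν i) (lam i) - slopeGap μ (lam i)) U (𝓝 0) := by
  suffices hlim : Tendsto (fun i => lam i * laplaceMoment 2 (ν i) (survivalTilt (ν i) (lam i)) -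
      lam i * laplaceMoment 2 μ (survivalTilt μ (lam i))) U (𝓝 0) by
    simpa only [slopeGap, sub_sub_sub_cancel_left, neg_sub, neg_zero] using hlim.neg
  rcases tendsto_atTop_or_exists_nhds_of_ultrafilter U
    (hlam.mono fun i hi => survivalTilt_nonneg (μ := (μ : Measure ℝ)) hi.le) with hx | ⟨y, hy, hx⟩
  · simpa only [sub_self] using (h.tendsto_mul_laplaceMoment_two_of_atTop hpos hlam
      (h.tendsto_survivalTilt_of_atTop hpos hlam hx)).sub
      ((const h.isWeightLaw_lim).tendsto_mul_laplaceMoment_two_of_atTop hpos hlam hx)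
  · simpa only [mul_sub] using h.tendsto_mul_laplaceMoment_two_sub hpos hlam hy hx

end TendstoWithSecondMoment

section RandomVariable

variable {Ω : Type*} [MeasurableSpace Ω] {P : Measure Ω} {X : Ω → ℝ}

lemma laplaceDefect_map (hX : AEMeasurable X P) (p : ℕ) (s : ℝ) :
    laplaceDefect p (P.map X) s = ∫ ω, X ω ^ p * (1 - Real.exp (-(X ω) * s)) ∂P :=
  integral_map hX (by fun_prop)

lemma laplaceMoment_map (hX : AEMeasurable X P) (p : ℕ) (s : ℝ) :
    laplaceMoment p (P.map X) s = ∫ ω, X ω ^ p * Real.exp (-(X ω) * s) ∂P :=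
  integral_map hX (by fun_prop)

lemma isWeightLaw_map (hX : AEMeasurable X P) (hX0 : ∀ᵐ ω ∂P, 0 ≤ X ω)
    (hX2 : Integrable (fun ω => X ω ^ 2) P) : IsWeightLaw (P.map X) where
  nonneg := (ae_map_iff hX measurableSet_Ici).mpr hX0
  integrable_sq := (integrable_map_measure (by fun_prop) hX).mpr hX2

lemma tendstoWithSecondMoment_map [IsProbabilityMeasure P] {ι : Type*} {l : Filter ι}
    {Xn : ι → Ω → ℝ} (hX : AEMeasurable X P) (hXn : ∀ i, AEMeasurable (Xn i) P)
    (hX0 : ∀ᵐ ω ∂P, 0 ≤ X ω) (hXn0 : ∀ i, ∀ᵐ ω ∂P, 0 ≤ Xn i ω)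
    (hdist : ∀ f : BoundedContinuousFunction ℝ ℝ,
      Tendsto (fun i => ∫ ω, f (Xn i ω) ∂P) l (𝓝 (∫ ω, f (X ω) ∂P)))
    (hX2 : Integrable (fun ω => X ω ^ 2) P) (hXn2 : ∀ i, Integrable (fun ω => Xn i ω ^ 2) P)
    (hmom : Tendsto (fun i => ∫ ω, Xn i ω ^ 2 ∂P) l (𝓝 (∫ ω, X ω ^ 2 ∂P))) :
    TendstoWithSecondMoment (fun i => ⟨P.map (Xn i), Measure.isProbabilityMeasure_map (hXn i)⟩) l
      ⟨P.map X, Measure.isProbabilityMeasure_map hX⟩ where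
  isWeightLaw i := isWeightLaw_map (hXn i) (hXn0 i) (hXn2 i)
  isWeightLaw_lim := isWeightLaw_map hX hX0 hX2
  tendsto := by
    refine ProbabilityMeasure.tendsto_iff_forall_integral_tendsto.mpr fun f => ?_
    have hf {m : Measure ℝ} : AEStronglyMeasurable f m := f.continuous.aestronglyMeasurable
    simpa only [ProbabilityMeasure.coe_mk, integral_map hX hf, integral_map (hXn _) hf]
      using hdist f
  tendsto_sq := by
    have hsq {m : Measure ℝ} : AEStronglyMeasurable (fun w : ℝ => w ^ 2) m := by fun_prop
    simpa only [ProbabilityMeasure.coe_mk, integral_map hX hsq, integral_map (hXn _) hsq]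
      using hmom

end RandomVariable

theorem stmt_5_general {ι : Type*} {l : Filter ι} {ν : ι → ProbabilityMeasure ℝ}
    {μ : ProbabilityMeasure ℝ} (h : TendstoWithSecondMoment ν l μ)
    (hpos : ∀ᵐ w ∂(μ : Measure ℝ), 0 < w) :
    TendstoUniformlyOn (fun i => survivalDensity (ν i)) (survivalDensity μ) l (Ioi 0) ∧
      TendstoUniformlyOn (fun i => slopeGap (ν i)) (slopeGap μ) l (Ioi 0) :=
  ⟨tendstoUniformlyOn_of_forall_ultrafilter fun _ hfst hlam =>
      (h.comp hfst).tendsto_survivalDensity_sub hpos hlam,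
    tendstoUniformlyOn_of_forall_ultrafilter fun _ hfst hlam =>
      (h.comp hfst).tendsto_slopeGap_sub hpos hlam⟩

/-- Under Assumption 1, `sup_{λ > λ_crit} |ρ⁽ⁿ⁾(λ) - ρ(λ)| → 0` and
`sup_{λ > λ_crit} |β⁽ⁿ⁾(λ) - β(λ)| → 0` as `n → ∞`. -/
theorem stmt_5
    {Ω : Type*} [MeasurableSpace Ω] (P : Measure Ω) [IsProbabilityMeasure P]
    (W : Ω → ℝ) (Wn : ℕ → Ω → ℝ)
    (hWmeas : Measurable W) (hWnmeas : ∀ n, Measurable (Wn n))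
    (hWpos : ∀ᵐ ω ∂P, 0 < W ω) (hWnpos : ∀ n, ∀ᵐ ω ∂P, 0 < Wn n ω)
    (hdist : ∀ f : BoundedContinuousFunction ℝ ℝ,
      Tendsto (fun n => ∫ ω, f (Wn n ω) ∂P) atTop (𝓝 (∫ ω, f (W ω) ∂P)))
    (hW2 : Integrable (fun ω => (W ω) ^ 2) P)
    (hWn2 : ∀ n, Integrable (fun ω => (Wn n ω) ^ 2) P)
    (hmom : Tendsto (fun n => ∫ ω, (Wn n ω) ^ 2 ∂P) atTop (𝓝 (∫ ω, (W ω) ^ 2 ∂P)))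
    (lamCrit : ℝ) (hlamCrit : lamCrit = (∫ ω, (W ω) ^ 2 ∂P)⁻¹)
    (φ1n : ℕ → ℝ → ℝ)
    (hφ1n : ∀ n t, φ1n n t = ∫ ω, Wn n ω * (1 - Real.exp (-(Wn n ω) * t)) ∂P)
    (φ1 : ℝ → ℝ)
    (hφ1 : ∀ t, φ1 t = ∫ ω, W ω * (1 - Real.exp (-(W ω) * t)) ∂P)
    (θn : ℕ → ℝ → ℝ)
    (hθn : ∀ n lam, θn n lam = sInf {t : ℝ | 0 < t ∧ φ1n n (lam * t) - t < 0})
    (θ : ℝ → ℝ)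
    (hθ : ∀ lam, θ lam = sInf {t : ℝ | 0 < t ∧ φ1 (lam * t) - t < 0})
    (φ0n : ℕ → ℝ → ℝ)
    (hφ0n : ∀ n t, φ0n n t = ∫ ω, (1 - Real.exp (-(Wn n ω) * t)) ∂P)
    (φ0 : ℝ → ℝ)
    (hφ0 : ∀ t, φ0 t = ∫ ω, (1 - Real.exp (-(W ω) * t)) ∂P)
    (ρn : ℕ → ℝ → ℝ) (hρn : ∀ n lam, ρn n lam = φ0n n (lam * θn n lam))
    (ρ : ℝ → ℝ) (hρ : ∀ lam, ρ lam = φ0 (lam * θ lam))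
    (βn : ℕ → ℝ → ℝ)
    (hβn : ∀ n lam, βn n lam =
      1 - lam * ∫ ω, (Wn n ω) ^ 2 * Real.exp (-(Wn n ω) * (lam * θn n lam)) ∂P)
    (β : ℝ → ℝ)
    (hβ : ∀ lam, β lam =
      1 - lam * ∫ ω, (W ω) ^ 2 * Real.exp (-(W ω) * (lam * θ lam)) ∂P) :
    TendstoUniformlyOn (fun n lam => ρn n lam) ρ atTop (Ioi lamCrit) ∧
      TendstoUniformlyOn (fun n lam => βn n lam) β atTop (Ioi lamCrit) := by
  have hlaw := tendstoWithSecondMoment_map hWmeas.aemeasurable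
    (fun n => (hWnmeas n).aemeasurable) (hWpos.mono fun _ => le_of_lt)
    (fun n => (hWnpos n).mono fun _ => le_of_lt) hdist hW2 hWn2 hmom
  have hpos := (ae_map_iff hWmeas.aemeasurable measurableSet_Ioi).mpr hWpos
  have hsub : Ioi lamCrit ⊆ Ioi 0 := Ioi_subset_Ioi <| by
    rw [hlamCrit]
    exact inv_nonneg.mpr (integral_nonneg fun ω => sq_nonneg (W ω))
  have hlimit := (stmt_5_general hlaw hpos).imp (·.mono hsub) (·.mono hsub)
  simpa only [TendstoUniformlyOn, survivalDensity, slopeGap, survivalTilt, survivalRoot,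
    laplaceDefect_map hWmeas.aemeasurable, laplaceDefect_map (hWnmeas _).aemeasurable,
    laplaceMoment_map hWmeas.aemeasurable, laplaceMoment_map (hWnmeas _).aemeasurable,
    ProbabilityMeasure.coe_mk, pow_zero, pow_one, one_mul,
    hρ, hρn, hβ, hβn, hφ0, hφ0n, hθ, hθn, hφ1, hφ1n] using hlimit
end
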